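/- arXiv:cond-mat/9812201 — 7 statements merged into one kernel-verified Lean document; each statement's English description precedes it below -/
import Mathlib

section
/- (Proposition A, part (i); generalized Krebs–Sandow cancelling mechanism, periodic case.) Let m ≥ 1, r ≥ 2, n ≥ 1, and let h be a local transition matrix of range r on m states. Suppose there exist n×n real matrices D_0, …, D_{m−1} and, for every (r−1)-tuple i = (i_1,…,i_{r−1}) ∈ (Fin (r−1) → Fin m), an n×n real matrix X_i, such that for every r-tuple (i_1,…,i_r): Σ_{τ=(τ_1,…,τ_r)} h[(i_1,…,i_r), τ] · D_{τ_1} D_{τ_2} ⋯ D_{τ_r} = X_{(i_1,…,i_{r−1})} D_{i_r} − D_{i_1} X_{(i_2,…,i_r)} (products are matrix products). Then for every L ≥ r, the function P on configurations defined by P(σ) = Trace(D_{σ(0)} D_{σ(1)} ⋯ D_{σ(L−1)}) satisfies H^(p)_L P = 0, i.e. the matrix-product state P is a zero-energy eigenvector (stationary state) of the periodic stochastic Hamiltonian. -/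
open Finset

noncomputable section

/-- The configuration `σ` with the values at sites `k, k+1, …, k+r-1` (taken mod `L`)
replaced by the tuple `τ`. -/
def updateConfig (L m r : ℕ) (σ : Fin L → Fin m) (k : ℕ) (τ : Fin r → Fin m) :
    Fin L → Fin m :=
  fun i => if h : ∃ j : Fin r, (i : ℕ) = (k + (j : ℕ)) % L then τ h.choose else σ i

/-- The periodic stochastic Hamiltonian with bulk interaction of range `r`, acting on
real-valued functions of configurations of a ring of `L` sites with `m` states per site. -/
def Hper (L m r : ℕ) (h : (Fin r → Fin m) → (Fin r → Fin m) → ℝ)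
    (f : (Fin L → Fin m) → ℝ) : (Fin L → Fin m) → ℝ :=
  fun σ => ∑ k : Fin L, ∑ τ : Fin r → Fin m,
    h (fun j => σ ⟨((k : ℕ) + (j : ℕ)) % L, Nat.mod_lt _ k.pos⟩) τ *
      f (updateConfig L m r σ (k : ℕ) τ)

/-- The open-chain stochastic Hamiltonian with bulk interaction `hb` of range `r` and
boundary interactions `hl`, `hr` of range `r-1`, acting on real-valued functions of
configurations of a chain of `L` sites with `m` states per site. -/
def Hopen (L m r : ℕ) (hL : 0 < L)
    (hb : (Fin r → Fin m) → (Fin r → Fin m) → ℝ)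
    (hl hr : (Fin (r - 1) → Fin m) → (Fin (r - 1) → Fin m) → ℝ)
    (f : (Fin L → Fin m) → ℝ) : (Fin L → Fin m) → ℝ :=
  fun σ =>
    (∑ τ : Fin (r - 1) → Fin m,
      hl (fun j => σ ⟨(j : ℕ) % L, Nat.mod_lt _ hL⟩) τ *
        f (updateConfig L m (r - 1) σ 0 τ))
    + (∑ k ∈ Finset.range (L - r + 1), ∑ τ : Fin r → Fin m,
      hb (fun j => σ ⟨(k + (j : ℕ)) % L, Nat.mod_lt _ hL⟩) τ *
        f (updateConfig L m r σ k τ))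
    + (∑ τ : Fin (r - 1) → Fin m,
      hr (fun j => σ ⟨((L - (r - 1)) + (j : ℕ)) % L, Nat.mod_lt _ hL⟩) τ *
        f (updateConfig L m (r - 1) σ (L - (r - 1)) τ))

/-- The local transition matrix associated to a family of transition rates `w`:
`h[τ',τ] = -w(τ→τ')` off the diagonal and `h[τ,τ] = ∑_{τ'≠τ} w(τ→τ')`. -/
def rateToH {m k : ℕ} (w : (Fin k → Fin m) → (Fin k → Fin m) → ℝ) :
    (Fin k → Fin m) → (Fin k → Fin m) → ℝ :=
  fun a b => if a = b then ∑ c ∈ Finset.univ.filter (fun c => c ≠ a), w a c else -(w b a)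

/-!
Extend a configuration periodically to `ℕ`. Since the trace is cyclic, the ring may be cut open just
before the site `k` on which the `k`-th local term acts, so that this term replaces the leading `r`
factors of the product. The cancelling relation turns the outcome into a difference
`T k - T (k + 1)`, where `T k` is the trace of the product with the factors at `k, …, k + r - 2`
replaced by `X`; here cyclicity is used again, to move `D` at site `k` to the far end. As `T` is
`L`-periodic, the sum over the ring telescopes to zero.
-/

section WindowProd

variable {M : Type*} [Monoid M]

/-- The ordered product `g a * g (a + 1) * ⋯ * g (a + len - 1)` of a sequence over a window of
consecutive indices. -/
def windowProd (g : ℕ → M) (a len : ℕ) : M :=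
  (List.ofFn fun j : Fin len => g (a + j)).prod

lemma windowProd_one (g : ℕ → M) (a : ℕ) : windowProd g a 1 = g a := by
  simp [windowProd]

lemma windowProd_add (g : ℕ → M) (a p q : ℕ) :
    windowProd g a (p + q) = windowProd g a p * windowProd g (a + p) q := by
  simp [windowProd, List.ofFn_add, add_assoc]

lemma windowProd_succ (g : ℕ → M) (a len : ℕ) :
    windowProd g a (len + 1) = windowProd g a len * g (a + len) := by
  rw [windowProd_add, windowProd_one]

lemma windowProd_succ' (g : ℕ → M) (a len : ℕ) :
    windowProd g a (len + 1) = g a * windowProd g (a + 1) len := by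
  rw [add_comm, windowProd_add, windowProd_one]

lemma windowProd_periodic {g : ℕ → M} {c : ℕ} (hg : Function.Periodic g c) (len : ℕ) :
    Function.Periodic (fun a => windowProd g a len) c := fun a => by
  simp only [windowProd, add_right_comm a c, hg _]

lemma trace_windowProd_of_periodic {B : Type*} {tr : M → B}
    (htr : ∀ a b, tr (a * b) = tr (b * a)) {g : ℕ → M} {L : ℕ} (hg : Function.Periodic g L)
    (k : ℕ) : tr (windowProd g k L) = tr (windowProd g 0 L) := by
  induction k with
  | zero => rfl
  | succ k ih =>
    cases L with
    | zero => simp [windowProd]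
    | succ l =>
      calc tr (windowProd g (k + 1) (l + 1))
          = tr (windowProd g (k + 1) l * g k) := by
            rw [windowProd_succ, add_right_comm k, add_assoc k, hg]
        _ = tr (windowProd g k (l + 1)) := by rw [htr, windowProd_succ']
        _ = tr (windowProd g 0 (l + 1)) := ih

end WindowProd

lemma sum_trace_cancelling_eq_zero {A B : Type*} [Ring A] [AddCommGroup B] (tr : A →+ B)
    (htr : ∀ a b, tr (a * b) = tr (b * a)) {g x : ℕ → A} {s l : ℕ}
    (hg : Function.Periodic g (s + 1 + l)) (hx : Function.Periodic x (s + 1 + l)) :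
    ∑ k ∈ range (s + 1 + l),
      tr ((x k * g (k + s) - g k * x (k + 1)) * windowProd g (k + (s + 1)) l) = 0 := by
  let T : ℕ → B := fun k => tr (x k * windowProd g (k + s) (l + 1))
  have hT : Function.Periodic T (s + 1 + l) := fun k => by
    simp only [T, hx k, add_right_comm k _ s, windowProd_periodic hg (l + 1) (k + s)]
  have left (k : ℕ) : tr (x k * g (k + s) * windowProd g (k + (s + 1)) l) = T k := by
    rw [mul_assoc, ← add_assoc, ← windowProd_succ']
  have right (k : ℕ) : tr (g k * x (k + 1) * windowProd g (k + (s + 1)) l) = T (k + 1) := by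
    calc tr (g k * x (k + 1) * windowProd g (k + (s + 1)) l)
        = tr (x (k + 1) * (windowProd g (k + (s + 1)) l * g k)) := by
          rw [mul_assoc, htr, mul_assoc]
      _ = tr (x (k + 1) * windowProd g (k + (s + 1)) (l + 1)) := by
          rw [windowProd_succ, add_assoc k, hg]
      _ = T (k + 1) := by simp only [T, add_assoc, add_comm s 1]
  simp only [sub_mul, map_sub, left, right]
  rw [sum_range_sub', ← hT 0, zero_add, sub_self]

section Ring

variable {L : ℕ} [NeZero L]

/-- The `L`-periodic sequence that reads off a configuration of the ring of `L` sites. -/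
def periodicExtension {α : Type*} (σ : Fin L → α) (a : ℕ) : α :=
  σ (Fin.ofNat L a)

lemma periodicExtension_periodic {α : Type*} (σ : Fin L → α) :
    Function.Periodic (periodicExtension σ) L := fun a => by
  simp [periodicExtension, Fin.ofNat]

lemma trace_prod_ofFn_eq_trace_windowProd {α M B : Type*} [Monoid M] {tr : M → B}
    (htr : ∀ a b, tr (a * b) = tr (b * a)) (D : α → M) (σ : Fin L → α) (k : ℕ) :
    tr (List.ofFn fun j => D (σ j)).prod = tr (windowProd (D ∘ periodicExtension σ) k L) := by
  rw [trace_windowProd_of_periodic htr ((periodicExtension_periodic σ).comp D)]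
  simp [windowProd, periodicExtension]

variable {m r : ℕ} (σ : Fin L → Fin m) (k : ℕ) (τ : Fin r → Fin m)

lemma periodicExtension_updateConfig_of_lt (hrL : r ≤ L) (j : Fin r) :
    periodicExtension (updateConfig L m r σ k τ) (k + j) = τ j := by
  have hex : ∃ i : Fin r, (k + j) % L = (k + i) % L := ⟨j, rfl⟩
  have hmod : (j : ℕ) ≡ hex.choose [MOD L] := Nat.ModEq.add_left_cancel' k hex.choose_spec
  have hchoose : hex.choose = j :=
    Fin.ext (hmod.eq_of_lt_of_lt (by omega) (by omega)).symm
  exact (dif_pos hex).trans (congrArg τ hchoose)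

lemma periodicExtension_updateConfig_of_ge {j : ℕ} (hrj : r ≤ j) (hjL : j < L) :
    periodicExtension (updateConfig L m r σ k τ) (k + j) = periodicExtension σ (k + j) := by
  refine dif_neg fun ⟨i, hi⟩ => ?_
  have hji : j = i :=
    (Nat.ModEq.add_left_cancel' k hi).eq_of_lt_of_lt hjL (by omega)
  omega

lemma windowProd_updateConfig {M : Type*} [Monoid M] (D : Fin m → M) {l : ℕ}
    (hL : r + l = L) :
    windowProd (D ∘ periodicExtension (updateConfig L m r σ k τ)) k L =
      (List.ofFn fun j => D (τ j)).prod *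
        windowProd (D ∘ periodicExtension σ) (k + r) l := by
  have inside : windowProd (D ∘ periodicExtension (updateConfig L m r σ k τ)) k r =
      (List.ofFn fun j => D (τ j)).prod := by
    simp only [windowProd, Function.comp_apply,
      periodicExtension_updateConfig_of_lt σ k τ (Nat.le.intro hL)]
  have outside : windowProd (D ∘ periodicExtension (updateConfig L m r σ k τ)) (k + r) l =
      windowProd (D ∘ periodicExtension σ) (k + r) l := by
    refine congrArg (fun f => (List.ofFn f).prod) (funext fun j => congrArg D ?_)
    rw [add_assoc]
    exact periodicExtension_updateConfig_of_ge σ k τ (by omega) (by omega)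
  rw [← inside, ← outside, ← windowProd_add, hL]

end Ring

/-- The bulk cancelling mechanism for a local matrix `h` of range `s + 1`: on products of the `D`'s,
`h` acts as a difference of two products in which `X` stands for all factors but one. The entries
`D i` and `X i` may lie in any real algebra. -/
def IsBulkCancelling {m s : ℕ} {A : Type*} [Ring A] [Algebra ℝ A]
    (h : (Fin (s + 1) → Fin m) → (Fin (s + 1) → Fin m) → ℝ)
    (D : Fin m → A) (X : (Fin s → Fin m) → A) : Prop :=
  ∀ i : Fin (s + 1) → Fin m,
    ∑ τ : Fin (s + 1) → Fin m, h i τ • (List.ofFn fun j => D (τ j)).prod =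
      X (Fin.init i) * D (i (Fin.last s)) - D (i 0) * X (Fin.tail i)

section TracialAlgebra

variable {m s L : ℕ} {A : Type*} [Ring A] [Algebra ℝ A]
  {h : (Fin (s + 1) → Fin m) → (Fin (s + 1) → Fin m) → ℝ}
  {D : Fin m → A} {X : (Fin s → Fin m) → A}

lemma IsBulkCancelling.sum_mul_trace_updateConfig [NeZero L] (hDX : IsBulkCancelling h D X)
    {tr : A →ₗ[ℝ] ℝ} (htr : ∀ a b, tr (a * b) = tr (b * a)) {l : ℕ} (hL : s + 1 + l = L)
    (σ : Fin L → Fin m) (k : ℕ) :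
    ∑ τ : Fin (s + 1) → Fin m, h (fun j => periodicExtension σ (k + j)) τ *
        tr (List.ofFn fun j => D (updateConfig L m (s + 1) σ k τ j)).prod =
      tr ((X (fun j => periodicExtension σ (k + j)) * D (periodicExtension σ (k + s)) -
          D (periodicExtension σ k) * X (fun j => periodicExtension σ (k + 1 + j))) *
        windowProd (D ∘ periodicExtension σ) (k + (s + 1)) l) := by
  have htail : Fin.tail (fun j : Fin (s + 1) => periodicExtension σ (k + j)) =
      fun j : Fin s => periodicExtension σ (k + 1 + j) :=
    funext fun j => by simp only [Fin.tail, Fin.val_succ, add_assoc, add_comm 1]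
  have hlocal : ∑ τ : Fin (s + 1) → Fin m, h (fun j => periodicExtension σ (k + j)) τ •
        (List.ofFn fun j => D (τ j)).prod =
      X (fun j => periodicExtension σ (k + j)) * D (periodicExtension σ (k + s)) -
        D (periodicExtension σ k) * X (fun j => periodicExtension σ (k + 1 + j)) :=
    (hDX _).trans (by rw [htail]; rfl)
  simp only [trace_prod_ofFn_eq_trace_windowProd htr D _ k, windowProd_updateConfig σ k _ D hL]
  rw [← hlocal]
  simp only [sum_mul, smul_mul_assoc, map_sum, map_smul, smul_eq_mul]

theorem prop_A_periodic_general (tr : A →ₗ[ℝ] ℝ) (hDX : IsBulkCancelling h D X)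
    (htr : ∀ a b, tr (a * b) = tr (b * a)) (hL : s + 1 ≤ L) :
    Hper L m (s + 1) h (fun σ => tr (List.ofFn fun j => D (σ j)).prod) = 0 := by
  obtain ⟨l, rfl⟩ := Nat.exists_eq_add_of_le hL
  have : NeZero (s + 1 + l) := ⟨by omega⟩
  funext σ
  let g : ℕ → A := D ∘ periodicExtension σ
  let x : ℕ → A := fun k => X fun j => periodicExtension σ (k + j)
  have hg : Function.Periodic g (s + 1 + l) := (periodicExtension_periodic σ).comp D
  have hx : Function.Periodic x (s + 1 + l) := fun k => by
    simp only [x, add_right_comm k, periodicExtension_periodic σ _]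
  calc Hper (s + 1 + l) m (s + 1) h (fun σ => tr (List.ofFn fun j => D (σ j)).prod) σ
      = ∑ k : Fin (s + 1 + l),
          tr ((x k * g (k + s) - g k * x (k + 1)) * windowProd g (k + (s + 1)) l) :=
        sum_congr rfl fun k _ => hDX.sum_mul_trace_updateConfig htr rfl σ k
    _ = ∑ k ∈ range (s + 1 + l),
          tr ((x k * g (k + s) - g k * x (k + 1)) * windowProd g (k + (s + 1)) l) :=
        Fin.sum_univ_eq_sum_range
          (fun k => tr ((x k * g (k + s) - g k * x (k + 1)) * windowProd g (k + (s + 1)) l)) _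
    _ = 0 := sum_trace_cancelling_eq_zero tr.toAddMonoidHom htr hg hx

end TracialAlgebra

/-- **Proposition A, part (i)** (generalized Krebs–Sandow cancelling mechanism, periodic
case): if matrices `D_i` and `X_i` satisfy the bulk cancelling mechanism for a local
transition matrix `h` of range `r`, then the matrix-product state
`P(σ) = Trace (D_{σ 0} ⋯ D_{σ (L-1)})` is a zero-energy eigenvector of the periodic
stochastic Hamiltonian for every `L ≥ r`. -/
theorem prop_A_periodic (m r n L : ℕ) (hm : 1 ≤ m) (hr : 2 ≤ r) (hn : 1 ≤ n)
    (hL : r ≤ L)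
    (h : (Fin r → Fin m) → (Fin r → Fin m) → ℝ)
    (D : Fin m → Matrix (Fin n) (Fin n) ℝ)
    (X : (Fin (r - 1) → Fin m) → Matrix (Fin n) (Fin n) ℝ)
    (hbulk : ∀ i : Fin r → Fin m,
      ∑ τ : Fin r → Fin m, h i τ • (List.ofFn fun j => D (τ j)).prod
        = X (fun j : Fin (r - 1) => i ⟨(j : ℕ), by have := j.isLt; omega⟩) *
            D (i ⟨r - 1, by omega⟩)
          - D (i ⟨0, by omega⟩) *
            X (fun j : Fin (r - 1) => i ⟨(j : ℕ) + 1, by have := j.isLt; omega⟩)) :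
    Hper L m r h (fun σ => ((List.ofFn fun j : Fin L => D (σ j)).prod).trace) = 0 := by
  obtain ⟨s, rfl⟩ : ∃ s, r = s + 1 := ⟨r - 1, by omega⟩
  exact prop_A_periodic_general (Matrix.traceLinearMap (Fin n) ℝ ℝ) hbulk Matrix.trace_mul_comm hL
end
end

section
/- (Proposition A, part (ii); generalized Krebs–Sandow cancelling mechanism, boundary case.) Let m ≥ 1, r ≥ 2, n ≥ 1, let h be a local transition matrix of range r on m states, and let h_left, h_right be local transition matrices of range r−1. Suppose there exist n×n real matrices D_0, …, D_{m−1} and, for every (r−1)-tuple i, an n×n real matrix X_i, satisfying the bulk relations: for every r-tuple (i_1,…,i_r), Σ_{τ=(τ_1,…,τ_r)} h[(i_1,…,i_r), τ] · D_{τ_1} ⋯ D_{τ_r} = X_{(i_1,…,i_{r−1})} D_{i_r} − D_{i_1} X_{(i_2,…,i_r)}; and suppose there exist a row vector W ∈ ℝ^n and a column vector V ∈ ℝ^n such that for every (r−1)-tuple i = (i_1,…,i_{r−1}): Σ_{τ=(τ_1,…,τ_{r−1})} h_left[i, τ] · W D_{τ_1} ⋯ D_{τ_{r−1}} = −W X_i,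 and Σ_{τ=(τ_1,…,τ_{r−1})} h_right[i, τ] · D_{τ_1} ⋯ D_{τ_{r−1}} V = X_i V. Then for every L ≥ 2(r−1), the function P on configurations defined by P(σ) = W D_{σ(0)} D_{σ(1)} ⋯ D_{σ(L−1)} V satisfies H_L P = 0, i.e. the matrix-product state P is a zero-energy eigenvector of the stochastic Hamiltonian with boundary interactions. -/
open Finset

noncomputable section

/-!
Fix a configuration and let `F k` be the weight of the matrix product in which the matrices at the
`r - 1` sites starting at `k` are replaced by the auxiliary matrix `X` of the tuple found there.
By the bulk relation the interaction term at site `k` contributes `F k - F (k + 1)`, so the bulk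
part of `H_L P` telescopes to `F 0 - F (L - r + 1)`; the boundary relations contribute `-F 0` on the
left and `F (L - r + 1)` on the right.
-/

/-- The `q` consecutive values of `σ` starting at site `k`, with sites read modulo `L` as in
`Hopen`, so that no bound on `k + q` is needed. -/
def window {α : Type*} {L : ℕ} (hL : 0 < L) (σ : Fin L → α) (k q : ℕ) : Fin q → α :=
  fun j => σ ⟨(k + (j : ℕ)) % L, Nat.mod_lt _ hL⟩

/-- The ordered product `D (τ 0) * ⋯ * D (τ (q - 1))` along the tuple `τ`. -/
def wordProd {α M : Type*} [Monoid M] (D : α → M) {q : ℕ} (τ : Fin q → α) : M :=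
  (List.ofFn fun j => D (τ j)).prod

section Window

variable {α M : Type*} [Monoid M] (D : α → M) {L : ℕ} (hL : 0 < L) (σ : Fin L → α)

lemma window_apply {k q : ℕ} (j : Fin q) (hkj : k + (j : ℕ) < L) :
    window hL σ k q j = σ ⟨k + j, hkj⟩ :=
  congrArg σ (Fin.ext (Nat.mod_eq_of_lt hkj))

lemma window_zero_self : window hL σ 0 L = σ := by
  funext j
  simp only [window, zero_add, Nat.mod_eq_of_lt j.isLt]

lemma init_window (k q : ℕ) : Fin.init (window hL σ k (q + 1)) = window hL σ k q := rfl

lemma tail_window (k q : ℕ) : Fin.tail (window hL σ k (q + 1)) = window hL σ (k + 1) q := by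
  funext j
  simp only [Fin.tail, window, Fin.val_succ, add_assoc, add_comm 1]

lemma window_apply_last (k q : ℕ) :
    window hL σ k (q + 1) (Fin.last q) = window hL σ (k + q) 1 0 := rfl

lemma window_apply_zero (k q : ℕ) : window hL σ k (q + 1) 0 = window hL σ k 1 0 := rfl

lemma wordProd_fin_zero (τ : Fin 0 → α) : wordProd D τ = 1 := by
  simp only [wordProd, List.ofFn_zero, List.prod_nil]

lemma wordProd_fin_one (τ : Fin 1 → α) : wordProd D τ = D (τ 0) := by
  simp [wordProd]

lemma wordProd_window_add (k p q : ℕ) :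
    wordProd D (window hL σ k (p + q)) =
      wordProd D (window hL σ k p) * wordProd D (window hL σ (k + p) q) := by
  simp [wordProd, window, List.ofFn_add, add_assoc]

end Window

section UpdateConfig

variable {L m q k : ℕ} (hL : 0 < L) (σ : Fin L → Fin m) (τ : Fin q → Fin m)

lemma updateConfig_apply_of_eq_add (hk : k + q ≤ L) {i : Fin L} {j : Fin q}
    (hij : (i : ℕ) = k + j) : updateConfig L m q σ k τ i = τ j := by
  have hmod (x : Fin q) : (k + (x : ℕ)) % L = k + x := Nat.mod_eq_of_lt (by omega)
  have hex : ∃ x : Fin q, (i : ℕ) = (k + (x : ℕ)) % L := ⟨j, by rw [hmod, hij]⟩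
  have hchoose : (i : ℕ) = k + hex.choose := hex.choose_spec.trans (hmod _)
  rw [updateConfig, dif_pos hex]
  exact congrArg τ (Fin.ext (by omega))

lemma updateConfig_apply_of_lt_or_le (hk : k + q ≤ L) {i : Fin L}
    (hi : (i : ℕ) < k ∨ k + q ≤ i) : updateConfig L m q σ k τ i = σ i := by
  refine dif_neg ?_
  rintro ⟨x, hx⟩
  rw [Nat.mod_eq_of_lt (by omega)] at hx
  omega

lemma window_updateConfig_self (hk : k + q ≤ L) :
    window hL (updateConfig L m q σ k τ) k q = τ := by
  funext j
  rw [window_apply hL _ j (by omega)]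
  exact updateConfig_apply_of_eq_add σ τ hk rfl

lemma window_updateConfig_of_disjoint (hk : k + q ≤ L) {a l : ℕ} (ha : a + l ≤ L)
    (hdisj : a + l ≤ k ∨ k + q ≤ a) :
    window hL (updateConfig L m q σ k τ) a l = window hL σ a l := by
  funext j
  rw [window_apply hL _ j (by omega), window_apply hL _ j (by omega)]
  exact updateConfig_apply_of_lt_or_le σ τ hk (by simp only; omega)

lemma wordProd_updateConfig {M : Type*} [Monoid M] (D : Fin m → M) (hk : k + q ≤ L) :
    wordProd D (updateConfig L m q σ k τ) =
      wordProd D (window hL σ 0 k) * wordProd D τ *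
        wordProd D (window hL σ (k + q) (L - (k + q))) := by
  set ρ := updateConfig L m q σ k τ with hρ
  calc wordProd D ρ
      = wordProd D (window hL ρ 0 (k + q + (L - (k + q)))) := by
        rw [Nat.add_sub_cancel' hk, window_zero_self]
    _ = wordProd D (window hL ρ 0 k) * wordProd D (window hL ρ k q) *
          wordProd D (window hL ρ (k + q) (L - (k + q))) := by
        simp only [wordProd_window_add, zero_add]
    _ = _ := by
        rw [hρ, window_updateConfig_self hL σ τ hk,
          window_updateConfig_of_disjoint hL σ τ hk (by omega) (by omega),
          window_updateConfig_of_disjoint hL σ τ hk (by omega) (by omega)]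

end UpdateConfig

section Insertion

variable {R α A : Type*} [CommSemiring R] [Semiring A] [Algebra R A]

variable (R) in
/-- The product of `D` along `σ` in which the factors at the `q` sites starting at `k` have been
replaced by a single element of `A`, as a linear map of that element. -/
def insertProd (D : α → A) {L : ℕ} (hL : 0 < L) (σ : Fin L → α) (k q : ℕ) : A →ₗ[R] A :=
  LinearMap.mulLeftRight R
    (wordProd D (window hL σ 0 k), wordProd D (window hL σ (k + q) (L - (k + q))))

variable (D : α → A) {L : ℕ} (hL : 0 < L) (σ : Fin L → α)

lemma insertProd_apply (k q : ℕ) (x : A) :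
    insertProd R D hL σ k q x =
      wordProd D (window hL σ 0 k) * x * wordProd D (window hL σ (k + q) (L - (k + q))) :=
  LinearMap.mulLeftRight_apply _ _ x

lemma insertProd_zero_left (q : ℕ) (x : A) :
    insertProd R D hL σ 0 q x = x * wordProd D (window hL σ q (L - q)) := by
  rw [insertProd_apply, wordProd_fin_zero, one_mul, zero_add]

lemma insertProd_sub_self {q : ℕ} (hq : q ≤ L) (x : A) :
    insertProd R D hL σ (L - q) q x = wordProd D (window hL σ 0 (L - q)) * x := by
  rw [insertProd_apply, Nat.sub_add_cancel hq, Nat.sub_self, wordProd_fin_zero, mul_one]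

lemma insertProd_succ_mul_last {k q : ℕ} (hkq : k + q < L) (x : A) :
    insertProd R D hL σ k (q + 1) (x * D (window hL σ k (q + 1) (Fin.last q))) =
      insertProd R D hL σ k q x := by
  have hlen : L - (k + q) = 1 + (L - (k + (q + 1))) := by omega
  rw [insertProd_apply, insertProd_apply, hlen, wordProd_window_add, wordProd_fin_one,
    window_apply_last]
  simp only [mul_assoc, add_assoc]

lemma insertProd_succ_first_mul (k q : ℕ) (x : A) :
    insertProd R D hL σ k (q + 1) (D (window hL σ k (q + 1) 0) * x) =
      insertProd R D hL σ (k + 1) q x := by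
  rw [insertProd_apply, insertProd_apply, wordProd_window_add, wordProd_fin_one,
    window_apply_zero, zero_add, add_right_comm k 1 q, add_assoc k q 1]
  simp only [mul_assoc]

end Insertion

section LocalTerms

variable {R A : Type*} {m L q : ℕ}

lemma wordProd_updateConfig_eq_insertProd [CommSemiring R] [Semiring A] [Algebra R A]
    (D : Fin m → A) (hL : 0 < L) (σ : Fin L → Fin m) {k : ℕ} (hk : k + q ≤ L)
    (τ : Fin q → Fin m) :
    wordProd D (updateConfig L m q σ k τ) = insertProd R D hL σ k q (wordProd D τ) := by
  rw [wordProd_updateConfig hL σ τ D hk, insertProd_apply]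

lemma sum_right_mul_wordProd_updateConfig [CommSemiring R] [Semiring A] [Algebra R A]
    {D : Fin m → A} {X : (Fin q → Fin m) → A} {φ : A →ₗ[R] R}
    {hr : (Fin q → Fin m) → (Fin q → Fin m) → R}
    (hright : ∀ i a, ∑ τ, hr i τ * φ (a * wordProd D τ) = φ (a * X i))
    (hL : 0 < L) (hq : q ≤ L) (σ : Fin L → Fin m) :
    ∑ τ, hr (window hL σ (L - q) q) τ * φ (wordProd D (updateConfig L m q σ (L - q) τ)) =
      φ (insertProd R D hL σ (L - q) q (X (window hL σ (L - q) q))) := by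
  simp only [wordProd_updateConfig_eq_insertProd (R := R) D hL σ (Nat.sub_add_cancel hq).le,
    insertProd_sub_self D hL σ hq, hright]

variable [CommRing R] [Ring A] [Algebra R A] {D : Fin m → A} {X : (Fin q → Fin m) → A}
  {φ : A →ₗ[R] R}

lemma sum_left_mul_wordProd_updateConfig {hl : (Fin q → Fin m) → (Fin q → Fin m) → R}
    (hleft : ∀ i b, ∑ τ, hl i τ * φ (wordProd D τ * b) = -φ (X i * b))
    (hL : 0 < L) (hq : q ≤ L) (σ : Fin L → Fin m) :
    ∑ τ, hl (window hL σ 0 q) τ * φ (wordProd D (updateConfig L m q σ 0 τ)) =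
      -φ (insertProd R D hL σ 0 q (X (window hL σ 0 q))) := by
  simp only [wordProd_updateConfig_eq_insertProd (R := R) D hL σ ((zero_add q).trans_le hq),
    insertProd_zero_left, hleft]

lemma sum_bulk_mul_wordProd_updateConfig {h : (Fin (q + 1) → Fin m) → (Fin (q + 1) → Fin m) → R}
    (hbulk : ∀ i, ∑ τ, h i τ • wordProd D τ =
      X (Fin.init i) * D (i (Fin.last q)) - D (i 0) * X (Fin.tail i))
    (hL : 0 < L) (σ : Fin L → Fin m) {k : ℕ} (hk : k + q < L) :
    ∑ τ, h (window hL σ k (q + 1)) τ * φ (wordProd D (updateConfig L m (q + 1) σ k τ)) =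
      φ (insertProd R D hL σ k q (X (window hL σ k q))) -
        φ (insertProd R D hL σ (k + 1) q (X (window hL σ (k + 1) q))) := by
  set ι := window hL σ k (q + 1) with hι
  calc ∑ τ, h ι τ * φ (wordProd D (updateConfig L m (q + 1) σ k τ))
      = φ (insertProd R D hL σ k (q + 1) (∑ τ, h ι τ • wordProd D τ)) := by
        simp only [map_sum, map_smul, smul_eq_mul,
          wordProd_updateConfig_eq_insertProd (R := R) D hL σ (show k + (q + 1) ≤ L from hk)]
    _ = φ (insertProd R D hL σ k (q + 1) (X (Fin.init ι) * D (ι (Fin.last q)))) -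
          φ (insertProd R D hL σ k (q + 1) (D (ι 0) * X (Fin.tail ι))) := by
        rw [hbulk, map_sub, map_sub]
    _ = _ := by
        rw [hι, insertProd_succ_mul_last D hL σ hk, insertProd_succ_first_mul, init_window,
          tail_window]

end LocalTerms

lemma Hopen_succ_apply {m q L : ℕ} (hL : 0 < L)
    (h : (Fin (q + 1) → Fin m) → (Fin (q + 1) → Fin m) → ℝ)
    (hl hr : (Fin q → Fin m) → (Fin q → Fin m) → ℝ) (f : (Fin L → Fin m) → ℝ)
    (σ : Fin L → Fin m) :
    Hopen L m (q + 1) hL h hl hr f σ =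
      ∑ τ, hl (window hL σ 0 q) τ * f (updateConfig L m q σ 0 τ) +
        ∑ k ∈ range (L - (q + 1) + 1), ∑ τ,
          h (window hL σ k (q + 1)) τ * f (updateConfig L m (q + 1) σ k τ) +
        ∑ τ, hr (window hL σ (L - q) q) τ * f (updateConfig L m q σ (L - q) τ) := by
  have left_window : window hL σ 0 q = fun j : Fin q => σ ⟨(j : ℕ) % L, Nat.mod_lt _ hL⟩ := by
    funext j
    simp only [window, zero_add]
  rw [left_window]
  rfl

/-- The functional `φ` plays the role of `a ↦ W a V`, so that representations of the matrix-product
algebra of infinite dimension are covered. -/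
theorem prop_A_boundary_general {A : Type*} [Ring A] [Algebra ℝ A] {m q L : ℕ} (hL : q < L)
    (h : (Fin (q + 1) → Fin m) → (Fin (q + 1) → Fin m) → ℝ)
    (hl hr : (Fin q → Fin m) → (Fin q → Fin m) → ℝ)
    (D : Fin m → A) (X : (Fin q → Fin m) → A) (φ : A →ₗ[ℝ] ℝ)
    (hbulk : ∀ i, ∑ τ, h i τ • wordProd D τ =
      X (Fin.init i) * D (i (Fin.last q)) - D (i 0) * X (Fin.tail i))
    (hleft : ∀ i b, ∑ τ, hl i τ * φ (wordProd D τ * b) = -φ (X i * b))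
    (hright : ∀ i a, ∑ τ, hr i τ * φ (a * wordProd D τ) = φ (a * X i)) :
    Hopen L m (q + 1) (Nat.zero_lt_of_lt hL) h hl hr (fun σ => φ (wordProd D σ)) = 0 := by
  have hpos : 0 < L := Nat.zero_lt_of_lt hL
  funext σ
  let F (k : ℕ) : ℝ := φ (insertProd ℝ D hpos σ k q (X (window hpos σ k q)))
  have bulk_sum : ∑ k ∈ range (L - (q + 1) + 1), ∑ τ, h (window hpos σ k (q + 1)) τ *
      φ (wordProd D (updateConfig L m (q + 1) σ k τ)) = F 0 - F (L - q) := by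
    rw [show L - (q + 1) + 1 = L - q by omega, ← sum_range_sub']
    exact sum_congr rfl fun k hk =>
      sum_bulk_mul_wordProd_updateConfig hbulk hpos σ
        (Nat.add_lt_of_lt_sub (mem_range.mp hk))
  calc Hopen L m (q + 1) hpos h hl hr (fun σ => φ (wordProd D σ)) σ
      = -F 0 + (F 0 - F (L - q)) + F (L - q) := by
        rw [Hopen_succ_apply, sum_left_mul_wordProd_updateConfig hleft hpos hL.le, bulk_sum,
          sum_right_mul_wordProd_updateConfig hright hpos hL.le]
    _ = 0 := by ring

section MatrixElement

open Matrix

variable {R ι κ : Type*} [Fintype ι] [Fintype κ]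

/-- The matrix element `A ↦ W A V` as a linear functional of `A`. -/
def matrixElement [CommSemiring R] (W V : ι → R) : Matrix ι ι R →ₗ[R] R where
  toFun A := W ⬝ᵥ A *ᵥ V
  map_add' A B := by rw [add_mulVec, dotProduct_add]
  map_smul' c A := by rw [smul_mulVec, dotProduct_smul, RingHom.id_apply]

lemma matrixElement_apply [CommSemiring R] (W V : ι → R) (A : Matrix ι ι R) :
    matrixElement W V A = W ⬝ᵥ A *ᵥ V := rfl

variable {c : κ → R} {P : κ → Matrix ι ι R} {Y : Matrix ι ι R} {W V : ι → R}

lemma sum_mul_matrixElement_mul_left [CommSemiring R]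
    (hV : ∑ t, c t • P t *ᵥ V = Y *ᵥ V) (B : Matrix ι ι R) :
    ∑ t, c t * matrixElement W V (B * P t) = matrixElement W V (B * Y) := by
  simp only [matrixElement_apply, ← mulVec_mulVec, ← hV, mulVec_sum, dotProduct_sum, mulVec_smul,
    dotProduct_smul, smul_eq_mul]

lemma sum_mul_matrixElement_mul_right [CommRing R]
    (hW : ∑ t, c t • W ᵥ* P t = -(W ᵥ* Y)) (B : Matrix ι ι R) :
    ∑ t, c t * matrixElement W V (P t * B) = -matrixElement W V (Y * B) := by
  have matrixElement_mul (A : Matrix ι ι R) :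
      matrixElement W V (A * B) = (W ᵥ* A) ⬝ᵥ (B *ᵥ V) := by
    rw [matrixElement_apply, ← dotProduct_mulVec, mulVec_mulVec]
  simp only [matrixElement_mul, ← neg_dotProduct, ← hW, sum_dotProduct, smul_dotProduct,
    smul_eq_mul]

end MatrixElement

open Matrix in
/-- **Proposition A, part (ii)** (generalized Krebs–Sandow cancelling mechanism, boundary
case): if matrices `D_i`, `X_i` satisfy the bulk cancelling mechanism and vectors `W`, `V`
satisfy the boundary cancelling mechanism for boundary interactions `hl`, `hr` of range
`r-1`, then the matrix-product state `P(σ) = W D_{σ 0} ⋯ D_{σ (L-1)} V` is a zero-energy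
eigenvector of the stochastic Hamiltonian with boundary interactions, for `L ≥ 2(r-1)`. -/
theorem prop_A_boundary (m r n L : ℕ) (hm : 1 ≤ m) (hr : 2 ≤ r) (hn : 1 ≤ n)
    (hL : 2 * (r - 1) ≤ L)
    (h : (Fin r → Fin m) → (Fin r → Fin m) → ℝ)
    (hl hrt : (Fin (r - 1) → Fin m) → (Fin (r - 1) → Fin m) → ℝ)
    (D : Fin m → Matrix (Fin n) (Fin n) ℝ)
    (X : (Fin (r - 1) → Fin m) → Matrix (Fin n) (Fin n) ℝ)
    (W V : Fin n → ℝ)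
    (hbulk : ∀ i : Fin r → Fin m,
      ∑ τ : Fin r → Fin m, h i τ • (List.ofFn fun j => D (τ j)).prod
        = X (fun j : Fin (r - 1) => i ⟨(j : ℕ), by have := j.isLt; omega⟩) *
            D (i ⟨r - 1, by omega⟩)
          - D (i ⟨0, by omega⟩) *
            X (fun j : Fin (r - 1) => i ⟨(j : ℕ) + 1, by have := j.isLt; omega⟩))
    (hleft : ∀ i : Fin (r - 1) → Fin m,
      ∑ τ : Fin (r - 1) → Fin m,
        hl i τ • Matrix.vecMul W ((List.ofFn fun j => D (τ j)).prod)
          = -Matrix.vecMul W (X i))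
    (hright : ∀ i : Fin (r - 1) → Fin m,
      ∑ τ : Fin (r - 1) → Fin m,
        hrt i τ • Matrix.mulVec ((List.ofFn fun j => D (τ j)).prod) V
          = Matrix.mulVec (X i) V) :
    Hopen L m r (by omega) h hl hrt
      (fun σ => W ⬝ᵥ Matrix.mulVec ((List.ofFn fun j : Fin L => D (σ j)).prod) V) = 0 := by
  obtain ⟨q, rfl⟩ : ∃ q, r = q + 1 := ⟨r - 1, by omega⟩
  exact prop_A_boundary_general (by omega) h hl hrt D X (matrixElement W V) hbulk
    (fun i => sum_mul_matrixElement_mul_right (hleft i))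
    (fun i => sum_mul_matrixElement_mul_left (hright i))
end
end

section
/- (Proposition B; ubiquity of matrix-product states for boundary interactions.) Let m ≥ 1, r ≥ 2, let h be a local transition matrix of range r on m states and h_left, h_right local transition matrices of range r−1, all stochastic in the sense that every off-diagonal entry is nonpositive and every column sums to zero (i.e. h[τ',τ] ≤ 0 for τ' ≠ τ and Σ_{τ'} h[τ',τ] = 0, and likewise for h_left, h_right). Suppose that for every L ≥ 2(r−1) the kernel of the stochastic Hamiltonian H_L (acting on real-valued functions of configurations of L sites) is one-dimensional, i.e. the stationary state is unique for every system length. Then there exist a real vector space A, linear maps D_0, …, D_{m−1} : A → A, for every (r−1)-tuple i a linear map X_i : A → A, a vector V ∈ A, and a linear functional W : A → ℝ, such that: (a) the bulk cancelling relations hold: for every r-tuple (i_1,…,i_r), Σ_{τ=(τ_1,…,τ_r)} h[(i_1,…,i_r), τ] · (D_{τ_1} ∘ ⋯ ∘ D_{τ_r}) = X_{(i_1,…,i_{r−1})} ∘ D_{i_r} − D_{i_1} ∘ X_{(i_2,…,i_r)}; (b) the boundary cancelling relations hold: for every (r−1)-tuple i, Σ_{τ} h_left[i, τ] · (W ∘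 D_{τ_1} ∘ ⋯ ∘ D_{τ_{r−1}}) = −W ∘ X_i and Σ_{τ} h_right[i, τ] · (D_{τ_1} ∘ ⋯ ∘ D_{τ_{r−1}})(V) = X_i(V); and (c) for every L ≥ 2(r−1), the function P_L on configurations defined by P_L(σ) = W(D_{σ(0)}(D_{σ(1)}(⋯(D_{σ(L−1)}(V))⋯)))) is a nonzero element of the kernel of H_L, i.e. the unique stationary state can be written as a matrix-product state. -/
open Finset

noncomputable section

/-- Data for a matrix-product representation: a real vector space `A`, operators
`D_i`, `X_i` on `A`, a linear functional `W` and a vector `V`. -/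
structure MPSRep (m r : ℕ) where
  A : Type
  [addCommGroup : AddCommGroup A]
  [module : Module ℝ A]
  D : Fin m → (A →ₗ[ℝ] A)
  X : (Fin (r - 1) → Fin m) → (A →ₗ[ℝ] A)
  W : A →ₗ[ℝ] ℝ
  V : A

attribute [instance] MPSRep.addCommGroup MPSRep.module

/-!
Let `A` be the free vector space on words, with `D_a` prepending the letter `a`, `V` the empty word,
and `W` pairing a word with the stationary state of its length (and with `0` if the word is shorter
than `2(r-1)`). Let `X_I` prepend `I` and then apply all bulk terms and the right boundary term of
the Hamiltonian to the resulting word. Splitting off the leftmost bulk term gives the bulk relation,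
and on the empty word only the right boundary term survives. Adding the left boundary term to `X_I`
completes the Hamiltonian, so the left relation says precisely that the states paired with words are
stationary.
-/

section Words

variable {α K : Type*} [Semiring K] {s : ℕ}

/-- The operator of left concatenation with `v` on the free module on words. -/
def prepend (v : List α) : (List α →₀ K) →ₗ[K] (List α →₀ K) :=
  Finsupp.lmapDomain K K (v ++ ·)

@[simp]
lemma prepend_single (v u : List α) (c : K) :
    prepend v (Finsupp.single u c) = Finsupp.single (v ++ u) c := by
  simp [prepend]

lemma prepend_append (v u : List α) :
    prepend (K := K) (v ++ u) = prepend v ∘ₗ prepend u := by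
  ext w : 2
  simp

lemma foldr_comp_prepend_singleton (v : Fin s → α) :
    (List.ofFn fun j => prepend (K := K) [v j]).foldr LinearMap.comp LinearMap.id =
      prepend (List.ofFn v) := by
  induction s with
  | zero =>
    ext w : 2
    simp
  | succ s ih =>
    rw [List.ofFn_succ, List.ofFn_succ, List.foldr_cons, ih, ← prepend_append,
      List.singleton_append]

/-- The word `u` with the letters at positions `k, k+1, …, k + v.length - 1` replaced by `v`. -/
def splice (u : List α) (k : ℕ) (v : List α) : List α :=
  u.take k ++ (v ++ u.drop (k + v.length))

lemma splice_cons_succ (a : α) (u v : List α) (k : ℕ) :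
    splice (a :: u) (k + 1) v = a :: splice u k v := by
  simp [splice, Nat.add_right_comm k 1]

lemma length_splice {u v : List α} {k : ℕ} (hk : k + v.length ≤ u.length) :
    (splice u k v).length = u.length := by
  simp only [splice, List.length_append, List.length_take, List.length_drop]
  omega

variable [Fintype α]

/-- The local matrix `g` applied at positions `k, …, k + s - 1` of the word `u`, as a formal
combination of words: the word obtained by writing `τ` there has coefficient `g(window, τ)`.
It is `0` when the window does not fit into `u`. -/
def actAt (g : (Fin s → α) → (Fin s → α) → K) (k : ℕ) (u : List α) : List α →₀ K :=
  if hk : k + s ≤ u.length then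
    ∑ τ, Finsupp.single (splice u k (List.ofFn τ)) (g (fun j => u[k + j]) τ)
  else 0

lemma actAt_zero_ofFn_append (g : (Fin s → α) → (Fin s → α) → K) (i : Fin s → α)
    (w : List α) :
    actAt g 0 (List.ofFn i ++ w) = ∑ τ, Finsupp.single (List.ofFn τ ++ w) (g i τ) := by
  simp [actAt, splice, List.getElem_append_left]

lemma sum_smul_prepend_single (g : (Fin s → α) → (Fin s → α) → K) (i : Fin s → α)
    (w : List α) :
    ∑ τ, g i τ • prepend (List.ofFn τ) (Finsupp.single w 1) = actAt g 0 (List.ofFn i ++ w) := by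
  simp [actAt_zero_ofFn_append]

lemma actAt_cons_succ (g : (Fin s → α) → (Fin s → α) → K) (k : ℕ) (a : α) (u : List α) :
    actAt g (k + 1) (a :: u) = prepend [a] (actAt g k u) := by
  by_cases hk : k + s ≤ u.length
  · simp [actAt, hk, splice_cons_succ, Nat.add_right_comm k 1]
  · have hk' : ¬ k + 1 + s ≤ (a :: u).length := by simp only [List.length_cons]; omega
    simp only [actAt, hk, hk', dite_false, map_zero]

lemma linearCombination_actAt_eq_zero {P : List α → K} {u : List α}
    (hP : ∀ v : List α, v.length = u.length → P v = 0)
    (g : (Fin s → α) → (Fin s → α) → K) (k : ℕ) :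
    Finsupp.linearCombination K P (actAt g k u) = 0 := by
  unfold actAt
  split_ifs with hk
  · simp only [map_sum, Finsupp.linearCombination_single]
    refine Finset.sum_eq_zero fun τ _ => ?_
    rw [hP _ (length_splice (by simpa using hk)), smul_zero]
  · exact map_zero _

/-- The bulk terms `h` and the right boundary term `g` of the Hamiltonian of an open chain,
applied to the word `u`. It is meant for words of length at least `s`: the length of a shorter
word minus `s` is truncated. -/
def bulkRight (h : (Fin (s + 1) → α) → (Fin (s + 1) → α) → K)
    (g : (Fin s → α) → (Fin s → α) → K) (u : List α) : List α →₀ K :=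
  ∑ k ∈ Finset.range (u.length - s), actAt h k u + actAt g (u.length - s) u

variable (h : (Fin (s + 1) → α) → (Fin (s + 1) → α) → K)
  (g : (Fin s → α) → (Fin s → α) → K)

lemma bulkRight_cons {u : List α} (hu : s ≤ u.length) (a : α) :
    bulkRight h g (a :: u) = actAt h 0 (a :: u) + prepend [a] (bulkRight h g u) := by
  have hlen : (a :: u).length - s = u.length - s + 1 := by
    rw [List.length_cons, Nat.sub_add_comm hu]
  simp only [bulkRight, hlen, Finset.sum_range_succ', actAt_cons_succ, map_add, map_sum]
  abel

lemma bulkRight_ofFn (i : Fin s → α) : bulkRight h g (List.ofFn i) = actAt g 0 (List.ofFn i) := by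
  simp [bulkRight]

lemma linearCombination_bulkRight_eq_zero {P : List α → K} {u : List α}
    (hP : ∀ v : List α, v.length = u.length → P v = 0) :
    Finsupp.linearCombination K P (bulkRight h g u) = 0 := by
  simp only [bulkRight, map_add, map_sum, linearCombination_actAt_eq_zero hP,
    Finset.sum_const_zero, add_zero]

/-- The operator `X_i` of the cancelling mechanism: prepend `i`, then apply `bulkRight`. -/
def bulkRightOp (i : Fin s → α) : (List α →₀ K) →ₗ[K] (List α →₀ K) :=
  Finsupp.linearCombination K (fun w => bulkRight h g (List.ofFn i ++ w))

end Words

section CancellingRelations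

variable {α K : Type*} [Fintype α] [CommRing K] {s : ℕ}
  (h : (Fin (s + 1) → α) → (Fin (s + 1) → α) → K)
  (gl gr : (Fin s → α) → (Fin s → α) → K)

lemma bulk_relation (i : Fin (s + 1) → α) :
    ∑ τ, h i τ • prepend (List.ofFn τ) =
      bulkRightOp h gr (Fin.init i) ∘ₗ prepend [i (Fin.last s)] -
        prepend [i 0] ∘ₗ bulkRightOp h gr (Fin.tail i) := by
  ext w : 2
  have hinit : List.ofFn (Fin.init i) ++ i (Fin.last s) :: w = List.ofFn i ++ w := by
    rw [List.ofFn_succ', List.concat_append, Fin.init_def]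
  have htail : i 0 :: (List.ofFn (Fin.tail i) ++ w) = List.ofFn i ++ w := by
    rw [List.ofFn_succ, List.cons_append, Fin.tail_def]
  have hrec := bulkRight_cons h gr (u := List.ofFn (Fin.tail i) ++ w) (by simp) (i 0)
  rw [htail, ← sum_smul_prepend_single] at hrec
  simpa [bulkRightOp, hinit, -List.ofFn_succ] using eq_sub_of_add_eq hrec.symm

lemma left_relation {P : List α → K}
    (hP : ∀ u : List α, s ≤ u.length →
      Finsupp.linearCombination K P (actAt gl 0 u + bulkRight h gr u) = 0)
    (i : Fin s → α) :
    ∑ τ, gl i τ • (Finsupp.linearCombination K P ∘ₗ prepend (List.ofFn τ)) =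
      -(Finsupp.linearCombination K P ∘ₗ bulkRightOp h gr i) := by
  ext w
  have hzero := hP (List.ofFn i ++ w) (by simp)
  rw [map_add, ← sum_smul_prepend_single, map_sum] at hzero
  simpa [bulkRightOp] using eq_neg_of_add_eq_zero_left hzero

lemma right_relation (i : Fin s → α) :
    ∑ τ, gr i τ • prepend (List.ofFn τ) (Finsupp.single [] 1) =
      bulkRightOp h gr i (Finsupp.single [] 1) := by
  rw [sum_smul_prepend_single]
  simp [bulkRightOp, bulkRight_ofFn]

end CancellingRelations

section OpenChain

variable {L m s : ℕ}

lemma updateConfig_apply {k : ℕ} (hk : k + s ≤ L) (σ : Fin L → Fin m) (τ : Fin s → Fin m)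
    (i : Fin L) :
    updateConfig L m s σ k τ i =
      if h : k ≤ i ∧ i - k < s then τ ⟨i - k, h.2⟩ else σ i := by
  have hsite (j : Fin s) : (i : ℕ) = (k + j) % L ↔ (i : ℕ) = k + j := by
    rw [Nat.mod_eq_of_lt (by omega)]
  simp only [updateConfig, hsite]
  split_ifs with hex hwin hwin
  · congr 1
    ext
    have := hex.choose_spec
    simp only
    omega
  · obtain ⟨j, hj⟩ := hex
    omega
  · exact absurd ⟨⟨i - k, hwin.2⟩, (Nat.add_sub_of_le hwin.1).symm⟩ hex
  · rfl

lemma ofFn_updateConfig {k : ℕ} (hk : k + s ≤ L) (σ : Fin L → Fin m) (τ : Fin s → Fin m) :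
    List.ofFn (updateConfig L m s σ k τ) = splice (List.ofFn σ) k (List.ofFn τ) := by
  refine List.ext_getElem ?_ fun n hn _ => ?_
  · rw [length_splice (by simpa using hk), List.length_ofFn, List.length_ofFn]
  · simp only [List.getElem_ofFn, updateConfig_apply hk, splice, List.getElem_append,
      List.length_take, List.length_ofFn, List.getElem_take, List.getElem_drop]
    grind

lemma sum_mul_updateConfig (hL : 0 < L) {k : ℕ} (hk : k + s ≤ L)
    (g : (Fin s → Fin m) → (Fin s → Fin m) → ℝ) (P : List (Fin m) → ℝ) (σ : Fin L → Fin m) :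
    ∑ τ, g (fun j => σ ⟨(k + j) % L, Nat.mod_lt _ hL⟩) τ *
        P (List.ofFn (updateConfig L m s σ k τ)) =
      Finsupp.linearCombination ℝ P (actAt g k (List.ofFn σ)) := by
  have hsite (j : Fin s) : (k + j) % L = k + j := Nat.mod_eq_of_lt (by omega)
  simp [actAt, hk, hsite, ofFn_updateConfig hk]

lemma Hopen_comp_ofFn (hL : s + 1 ≤ L)
    (h : (Fin (s + 1) → Fin m) → (Fin (s + 1) → Fin m) → ℝ)
    (gl gr : (Fin s → Fin m) → (Fin s → Fin m) → ℝ) (P : List (Fin m) → ℝ)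
    (σ : Fin L → Fin m) :
    Hopen L m (s + 1) (by omega) h gl gr (fun σ => P (List.ofFn σ)) σ =
      Finsupp.linearCombination ℝ P
        (actAt gl 0 (List.ofFn σ) + bulkRight h gr (List.ofFn σ)) := by
  have hleft := sum_mul_updateConfig (L := L) (by omega) (k := 0) (by omega) gl P σ
  have hbulk (k) (hk : k ∈ Finset.range (L - (s + 1) + 1)) :=
    sum_mul_updateConfig (by omega) (k := k) (by rw [Finset.mem_range] at hk; omega) h P σ
  have hright := sum_mul_updateConfig (L := L) (by omega) (k := L - s) (by omega) gr P σ
  simp only [Nat.zero_add] at hleft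
  rw [map_add, bulkRight, map_add, map_sum, List.length_ofFn, ← add_assoc,
    show Finset.range (L - s) = Finset.range (L - (s + 1) + 1) by congr 1; omega]
  exact congrArg₂ (· + ·) (congrArg₂ (· + ·) hleft (Finset.sum_congr rfl hbulk)) hright

end OpenChain

section Extension

variable {α K : Type*} [Zero K] {N : ℕ}

/-- The function on words that agrees with `f L` on words of length `L ≥ N` and vanishes on
words shorter than `N`. -/
def extendToWords (f : ∀ L, N ≤ L → (Fin L → α) → K) (u : List α) : K :=
  if hu : N ≤ u.length then f u.length hu u.get else 0

variable (f : ∀ L, N ≤ L → (Fin L → α) → K)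

lemma extendToWords_of_length_lt {u : List α} (hu : u.length < N) : extendToWords f u = 0 :=
  dif_neg hu.not_ge

lemma extendToWords_ofFn {L : ℕ} (hL : N ≤ L) (σ : Fin L → α) :
    extendToWords f (List.ofFn σ) = f L hL σ := by
  have hcongr {p q : Σ L, Fin L → α} (hpq : p = q) (hp : N ≤ p.1) (hq : N ≤ q.1) :
      f p.1 hp p.2 = f q.1 hq q.2 := by
    subst hpq
    rfl
  rw [extendToWords, dif_pos (by simpa using hL)]
  exact hcongr (List.equivSigmaTuple.apply_symm_apply ⟨L, σ⟩) _ hL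

end Extension

lemma linearCombination_extendToWords_eq_zero {m s : ℕ} (hs : 0 < s)
    (h : (Fin (s + 1) → Fin m) → (Fin (s + 1) → Fin m) → ℝ)
    (gl gr : (Fin s → Fin m) → (Fin s → Fin m) → ℝ)
    (f : ∀ L, 2 * s ≤ L → (Fin L → Fin m) → ℝ)
    (hf : ∀ L, ∀ hL : 2 * s ≤ L, Hopen L m (s + 1) (by omega) h gl gr (f L hL) = 0)
    (u : List (Fin m)) :
    Finsupp.linearCombination ℝ (extendToWords f) (actAt gl 0 u + bulkRight h gr u) = 0 := by
  by_cases hu : 2 * s ≤ u.length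
  · have hext : (fun σ => extendToWords f (List.ofFn σ)) = f u.length hu :=
      funext (extendToWords_ofFn f hu)
    have hHopen := Hopen_comp_ofFn (by omega) h gl gr (extendToWords f) u.get
    rwa [hext, hf, List.ofFn_get, Pi.zero_apply, eq_comm] at hHopen
  · have hshort (v : List (Fin m)) (hv : v.length = u.length) : extendToWords f v = 0 :=
      extendToWords_of_length_lt f (by omega)
    rw [map_add, linearCombination_actAt_eq_zero hshort,
      linearCombination_bulkRight_eq_zero h gr hshort, add_zero]

/-- The matrix-product representation on the free vector space on words whose functional pairs
a word `u` with `P u`. -/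
def wordRep {m s : ℕ} (h : (Fin (s + 1) → Fin m) → (Fin (s + 1) → Fin m) → ℝ)
    (gr : (Fin s → Fin m) → (Fin s → Fin m) → ℝ) (P : List (Fin m) → ℝ) : MPSRep m (s + 1) where
  A := List (Fin m) →₀ ℝ
  D a := prepend [a]
  X := bulkRightOp h gr
  W := Finsupp.linearCombination ℝ P
  V := Finsupp.single [] 1

lemma foldr_comp_wordRep_D {m s n : ℕ} (h : (Fin (s + 1) → Fin m) → (Fin (s + 1) → Fin m) → ℝ)
    (gr : (Fin s → Fin m) → (Fin s → Fin m) → ℝ) (P : List (Fin m) → ℝ) (v : Fin n → Fin m) :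
    (List.ofFn fun j => (wordRep h gr P).D (v j)).foldr LinearMap.comp LinearMap.id =
      prepend (List.ofFn v) :=
  foldr_comp_prepend_singleton v

lemma wordRep_state {m s L : ℕ} (h : (Fin (s + 1) → Fin m) → (Fin (s + 1) → Fin m) → ℝ)
    (gr : (Fin s → Fin m) → (Fin s → Fin m) → ℝ) (P : List (Fin m) → ℝ) (σ : Fin L → Fin m) :
    (wordRep h gr P).W (((List.ofFn fun j => (wordRep h gr P).D (σ j)).foldr LinearMap.comp
      LinearMap.id) (wordRep h gr P).V) = P (List.ofFn σ) := by
  rw [foldr_comp_wordRep_D]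
  change Finsupp.linearCombination ℝ P (prepend _ (Finsupp.single [] 1)) = _
  simp

theorem prop_B_general (m r : ℕ) (hr : 2 ≤ r)
    (h : (Fin r → Fin m) → (Fin r → Fin m) → ℝ)
    (hl hrt : (Fin (r - 1) → Fin m) → (Fin (r - 1) → Fin m) → ℝ)
    (f : ∀ L, 2 * (r - 1) ≤ L → (Fin L → Fin m) → ℝ)
    (hf : ∀ L, ∀ hL : 2 * (r - 1) ≤ L, Hopen L m r (by omega) h hl hrt (f L hL) = 0) :
    ∃ R : MPSRep m r,
      (∀ i : Fin r → Fin m,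
        ∑ τ : Fin r → Fin m,
          h i τ • (List.ofFn fun j => R.D (τ j)).foldr LinearMap.comp LinearMap.id
        = (R.X (fun j : Fin (r - 1) =>
              i ⟨(j : ℕ), by have := j.isLt; omega⟩)).comp (R.D (i ⟨r - 1, by omega⟩))
          - (R.D (i ⟨0, by omega⟩)).comp
              (R.X (fun j : Fin (r - 1) => i ⟨(j : ℕ) + 1, by have := j.isLt; omega⟩)))
      ∧ (∀ i : Fin (r - 1) → Fin m,
        ∑ τ : Fin (r - 1) → Fin m,
          hl i τ •
            (R.W.comp ((List.ofFn fun j => R.D (τ j)).foldr LinearMap.comp LinearMap.id))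
          = -(R.W.comp (R.X i)))
      ∧ (∀ i : Fin (r - 1) → Fin m,
        ∑ τ : Fin (r - 1) → Fin m,
          hrt i τ •
            (((List.ofFn fun j => R.D (τ j)).foldr LinearMap.comp LinearMap.id) R.V)
          = R.X i R.V)
      ∧ (∀ L, ∀ hL : 2 * (r - 1) ≤ L,
        (fun σ : Fin L → Fin m =>
            R.W (((List.ofFn fun j : Fin L => R.D (σ j)).foldr LinearMap.comp
              LinearMap.id) R.V)) = f L hL) := by
  obtain ⟨s, rfl⟩ : ∃ s, r = s + 1 := ⟨r - 1, by omega⟩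
  have hzero := linearCombination_extendToWords_eq_zero (by omega) h hl hrt f hf
  refine ⟨wordRep h hrt (extendToWords f), fun i => ?_, fun i => ?_, fun i => ?_, fun L hL => ?_⟩
  · simp only [foldr_comp_wordRep_D]
    exact bulk_relation h hrt i
  · simp only [foldr_comp_wordRep_D]
    exact left_relation h hl hrt (fun u _ => hzero u) i
  · simp only [foldr_comp_wordRep_D]
    exact right_relation h hrt i
  · ext σ
    rw [wordRep_state, extendToWords_ofFn]

/-- **Proposition B** (ubiquity of matrix-product states for boundary interactions):
for a stochastic process with bulk interaction of range `r` and boundary interactions of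
range `r-1` whose stationary state is unique (one-dimensional kernel of `H_L`) for every
system length `L ≥ 2(r-1)`, there exist a vector space `A`, operators `D_i`, `X_i`, a
functional `W` and a vector `V` satisfying the cancelling mechanism, such that the unique
stationary state is the (nonzero) matrix-product state
`P_L(σ) = W (D_{σ 0} (⋯ (D_{σ (L-1)} V)))` for every `L ≥ 2(r-1)`. -/
theorem prop_B (m r : ℕ) (hm : 1 ≤ m) (hr : 2 ≤ r)
    (h : (Fin r → Fin m) → (Fin r → Fin m) → ℝ)
    (hl hrt : (Fin (r - 1) → Fin m) → (Fin (r - 1) → Fin m) → ℝ)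
    (hoff : ∀ a b, a ≠ b → h a b ≤ 0) (hcol : ∀ b, ∑ a, h a b = 0)
    (hoffl : ∀ a b, a ≠ b → hl a b ≤ 0) (hcoll : ∀ b, ∑ a, hl a b = 0)
    (hoffr : ∀ a b, a ≠ b → hrt a b ≤ 0) (hcolr : ∀ b, ∑ a, hrt a b = 0)
    (huniq : ∀ L, ∀ hLu : 2 * (r - 1) ≤ L,
      ∃ f : (Fin L → Fin m) → ℝ, f ≠ 0 ∧
        Hopen L m r (by omega) h hl hrt f = 0 ∧
        ∀ g : (Fin L → Fin m) → ℝ,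
          Hopen L m r (by omega) h hl hrt g = 0 → ∃ c : ℝ, g = c • f) :
    ∃ R : MPSRep m r,
      (∀ i : Fin r → Fin m,
        ∑ τ : Fin r → Fin m,
          h i τ • (List.ofFn fun j => R.D (τ j)).foldr LinearMap.comp LinearMap.id
        = (R.X (fun j : Fin (r - 1) =>
              i ⟨(j : ℕ), by have := j.isLt; omega⟩)).comp (R.D (i ⟨r - 1, by omega⟩))
          - (R.D (i ⟨0, by omega⟩)).comp
              (R.X (fun j : Fin (r - 1) => i ⟨(j : ℕ) + 1, by have := j.isLt; omega⟩)))
      ∧ (∀ i : Fin (r - 1) → Fin m,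
        ∑ τ : Fin (r - 1) → Fin m,
          hl i τ •
            (R.W.comp ((List.ofFn fun j => R.D (τ j)).foldr LinearMap.comp LinearMap.id))
          = -(R.W.comp (R.X i)))
      ∧ (∀ i : Fin (r - 1) → Fin m,
        ∑ τ : Fin (r - 1) → Fin m,
          hrt i τ •
            (((List.ofFn fun j => R.D (τ j)).foldr LinearMap.comp LinearMap.id) R.V)
          = R.X i R.V)
      ∧ (∀ L, ∀ hL : 2 * (r - 1) ≤ L,
        (fun σ : Fin L → Fin m =>
            R.W (((List.ofFn fun j : Fin L => R.D (σ j)).foldr LinearMap.comp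
              LinearMap.id) R.V)) ≠ 0
        ∧ Hopen L m r (by omega) h hl hrt
            (fun σ : Fin L → Fin m =>
              R.W (((List.ofFn fun j : Fin L => R.D (σ j)).foldr LinearMap.comp
                LinearMap.id) R.V)) = 0) := by
  choose f hf_ne hf _ using huniq
  obtain ⟨R, hbulk, hleft, hright, hstate⟩ := prop_B_general m r hr h hl hrt f hf
  exact ⟨R, hbulk, hleft, hright, fun L hL => hstate L hL ▸ ⟨hf_ne L hL, hf L hL⟩⟩
end
end

section
/- (Fundamental diagram of model A.) Let p1, p2 ≥ 0, ρ ∈ [0,1], L ≥ 3, and let μ be the Bernoulli product probability measure on configurations σ : Fin L → Fin 2 in which the sites are independent and each site is occupied (state 1) with probability ρ. For any three cyclically consecutive distinct sites k, k+1, k+2 (mod L), the stationary flow J = p1·μ({σ : σ(k)=1, σ(k+1)=0}) + 2·p2·μ({σ : σ(k)=1, σ(k+1)=0, σ(k+2)=0}) equals ρ(1−ρ)·[p1 + 2·p2·(1−ρ)]. -/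
open MeasureTheory

/-!
Under a product measure, a pattern prescribed on distinct sites has the product of its one-site
probabilities, so a particle followed by `n` empty sites has probability `ρ(1-ρ)^n`. A hop of
length `n` needs exactly such a pattern and moves one particle across `n` bonds; the hops of
length 1 and 2 together give the flow. For `L ≥ 3`, the sites `k`, `k+1`, `k+2` do not wrap around
onto each other.
-/

open ProbabilityTheory

section CylinderProbabilities

variable {ι X : Type*} [Fintype ι] [MeasurableSpace X]

theorem pi_real_setOf_eq_and_forall_mem_eq (ν : Measure X) [IsProbabilityMeasure ν]
    {a : ι} {s : Finset ι} (ha : a ∉ s) (x y : X) :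
    (Measure.pi fun _ : ι => ν).real {σ | σ a = x ∧ ∀ i ∈ s, σ i = y}
      = ν.real {x} * ν.real {y} ^ s.card := by
  classical
  let t : ι → Set X := Function.update (fun _ => {y}) a {x}
  have t_of_mem : ∀ i ∈ s, t i = {y} := fun i hi =>
    Function.update_of_ne (ne_of_mem_of_not_mem hi ha) _ _
  have cylinder_eq_pi :
      {σ : ι → X | σ a = x ∧ ∀ i ∈ s, σ i = y} = (s.cons a ha : Set ι).pi t := by
    ext σ
    simp +contextual [t, t_of_mem]
  have prod_eq : ∏ i ∈ s, ν (t i) = ν {y} ^ s.card :=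
    Finset.prod_eq_pow_card fun i hi => by rw [t_of_mem i hi]
  rw [cylinder_eq_pi, measureReal_def, Measure.pi_pi_finset, Finset.prod_cons, prod_eq]
  simp [t, measureReal_def]

variable [MeasurableSingletonClass X] {x y : X}

theorem pi_bernoulliMeasure_real_setOf_eq_and_forall_mem_eq (hxy : x ≠ y) (p : unitInterval)
    {a : ι} {s : Finset ι} (ha : a ∉ s) :
    (Measure.pi fun _ : ι => bernoulliMeasure x y p).real {σ | σ a = x ∧ ∀ i ∈ s, σ i = y}
      = p * (1 - p) ^ s.card := by
  rw [pi_real_setOf_eq_and_forall_mem_eq _ ha]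
  simp [hxy, hxy.symm]

end CylinderProbabilities

theorem ofReal_smul_dirac_add_eq_bernoulliMeasure {X : Type*} [MeasurableSpace X] (x y : X)
    (p : unitInterval) :
    ENNReal.ofReal p • Measure.dirac x + ENNReal.ofReal (1 - p) • Measure.dirac y
      = bernoulliMeasure x y p := by
  have ofReal_eq (q : unitInterval) : ENNReal.ofReal q = unitInterval.toNNReal q :=
    ENNReal.ofReal_eq_coe_nnreal q.2.1
  rw [bernoulliMeasure_def, ← unitInterval.coe_symm_eq, ofReal_eq, ofReal_eq]
  rfl

/-- The site reached from `k` by `j` steps to the right on the ring of `L` sites. -/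
def ringSite {L : ℕ} (k : Fin L) (j : ℕ) : Fin L :=
  ⟨(k + j) % L, Nat.mod_lt _ k.pos⟩

theorem ringSite_zero {L : ℕ} (k : Fin L) : ringSite k 0 = k :=
  Fin.ext (Nat.mod_eq_of_lt k.isLt)

theorem ringSite_injOn {L : ℕ} (k : Fin L) : Set.InjOn (ringSite k) (Set.Iio L) :=
  fun _ hi _ hj h =>
    (Nat.ModEq.add_left_cancel' (k : ℕ) (Fin.ext_iff.mp h)).eq_of_lt_of_lt hi hj

theorem ringSite_ne_ringSite {L : ℕ} (k : Fin L) {i j : ℕ} (hi : i < L) (hj : j < L)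
    (hij : i ≠ j) : ringSite k i ≠ ringSite k j :=
  (ringSite_injOn k).ne hi hj hij

theorem ne_ringSite {L : ℕ} (k : Fin L) {j : ℕ} (hj0 : 0 < j) (hj : j < L) : k ≠ ringSite k j := by
  simpa only [ringSite_zero] using ringSite_ne_ringSite k k.pos hj hj0.ne

theorem modelA_fundamental_diagram_general {ι X : Type*} [Fintype ι] [MeasurableSpace X]
    [MeasurableSingletonClass X] {x y : X} (hxy : x ≠ y) (p : unitInterval) (p1 p2 : ℝ)
    {a b c : ι} (hab : a ≠ b) (hac : a ≠ c) (hbc : b ≠ c) :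
    p1 * (Measure.pi fun _ : ι => bernoulliMeasure x y p).real {σ | σ a = x ∧ σ b = y}
      + 2 * p2 * (Measure.pi fun _ : ι => bernoulliMeasure x y p).real
          {σ | σ a = x ∧ σ b = y ∧ σ c = y}
    = p * (1 - p) * (p1 + 2 * p2 * (1 - p)) := by
  classical
  have one_hole : (Measure.pi fun _ : ι => bernoulliMeasure x y p).real
      {σ | σ a = x ∧ σ b = y} = p * (1 - p) := by
    simpa using pi_bernoulliMeasure_real_setOf_eq_and_forall_mem_eq hxy p (s := {b}) (by simpa)
  have two_holes : (Measure.pi fun _ : ι => bernoulliMeasure x y p).real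
      {σ | σ a = x ∧ σ b = y ∧ σ c = y} = p * (1 - p) ^ 2 := by
    simpa [hbc] using
      pi_bernoulliMeasure_real_setOf_eq_and_forall_mem_eq hxy p (s := {b, c}) (by simp [hab, hac])
  rw [one_hole, two_holes]
  ring

/-- **Fundamental diagram of model A**: under the Bernoulli product measure with density
`ρ` on configurations of a ring of `L ≥ 3` sites, the stationary flow
`J = p1·P(σ(k)=1, σ(k+1)=0) + 2 p2·P(σ(k)=1, σ(k+1)=0, σ(k+2)=0)` (sites taken mod `L`)
equals `ρ(1-ρ)[p1 + 2 p2 (1-ρ)]`. -/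
theorem modelA_fundamental_diagram (p1 p2 ρ : ℝ) (hp1 : 0 ≤ p1) (hp2 : 0 ≤ p2)
    (hρ : ρ ∈ Set.Icc (0 : ℝ) 1) (L : ℕ) (hL : 3 ≤ L) (k : Fin L)
    (μ : Measure (Fin L → Fin 2))
    (hμ : μ = Measure.pi (fun _ : Fin L =>
      ENNReal.ofReal ρ • Measure.dirac (1 : Fin 2)
        + ENNReal.ofReal (1 - ρ) • Measure.dirac (0 : Fin 2))) :
    p1 * (μ {σ | σ k = 1 ∧ σ ⟨((k : ℕ) + 1) % L, Nat.mod_lt _ k.pos⟩ = 0}).toReal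
      + 2 * p2 * (μ {σ | σ k = 1 ∧ σ ⟨((k : ℕ) + 1) % L, Nat.mod_lt _ k.pos⟩ = 0
          ∧ σ ⟨((k : ℕ) + 2) % L, Nat.mod_lt _ k.pos⟩ = 0}).toReal
    = ρ * (1 - ρ) * (p1 + 2 * p2 * (1 - ρ)) := by
  rw [hμ, ofReal_smul_dirac_add_eq_bernoulliMeasure 1 0 ⟨ρ, hρ⟩]
  exact modelA_fundamental_diagram_general one_ne_zero ⟨ρ, hρ⟩ p1 p2
    (ne_ringSite k one_pos (by lia)) (ne_ringSite k two_pos (by lia))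
    (ringSite_ne_ringSite k (by lia) (by lia) (by lia))
end

section
/- (Exactly solvable line of model A with open boundaries.) Let p1, p2 ≥ 0, ρ ∈ (0,1), β3 ∈ ℝ, and set E = 1−ρ, D = ρ. Define boundary rates α1 = p1·D + p2·D·E, α2 = p2·D, α3 = α1, β1 = −β3 + p1·E + p2·E·(1+E), β2 = −β3 + p1 + p2·E, β4 = p1·E + p2·E². Let h be the local transition matrix of range 3 of model A, let h_left be the local transition matrix of range 2 with nonzero rates (0,0)→(1,0) at rate α1, (0,0)→(0,1) at rate α2, (0,1)→(1,1) at rate α3, and let h_right be the local transition matrix of range 2 with nonzero rates (0,1)→(0,0) at rate β1, (1,0)→(0,1) at rate β2, (1,0)→(0,0) at rate β3, (1,1)→(1,0) at rate β4. Then for every L ≥ 4, the product function P(σ) = Π_{k=0}^{L−1} w(σ(k)), where w(1) = ρ and w(0) = 1−ρ, satisfies H_L P = 0 for the open-chain stochastic Hamiltonian H_L = h_left + Σ_k h_k + h_right. -/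
open Finset

noncomputable section

/-- The bulk transition rates of **model A**: `(1,0,0)→(0,1,0)` at rate `p1`,
`(1,0,1)→(0,1,1)` at rate `p1`, and `(1,0,0)→(0,0,1)` at rate `p2`
(state `1` = particle, state `0` = empty). -/
def rateA (p1 p2 : ℝ) : (Fin 3 → Fin 2) → (Fin 3 → Fin 2) → ℝ :=
  fun τ τ' =>
    if τ = ![1, 0, 0] ∧ τ' = ![0, 1, 0] then p1
    else if τ = ![1, 0, 1] ∧ τ' = ![0, 1, 1] then p1
    else if τ = ![1, 0, 0] ∧ τ' = ![0, 0, 1] then p2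
    else 0

/-- The local transition matrix of range 3 of model A. -/
def hA (p1 p2 : ℝ) : (Fin 3 → Fin 2) → (Fin 3 → Fin 2) → ℝ := rateToH (rateA p1 p2)
/-- Left-boundary (input) transition rates for model A: `(0,0)→(1,0)` at rate `a1`,
`(0,0)→(0,1)` at rate `a2`, `(0,1)→(1,1)` at rate `a3`. -/
def rateLeftA (a1 a2 a3 : ℝ) : (Fin 2 → Fin 2) → (Fin 2 → Fin 2) → ℝ :=
  fun τ τ' =>
    if τ = ![0, 0] ∧ τ' = ![1, 0] then a1
    else if τ = ![0, 0] ∧ τ' = ![0, 1] then a2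
    else if τ = ![0, 1] ∧ τ' = ![1, 1] then a3
    else 0

/-- Right-boundary (output) transition rates for model A: `(0,1)→(0,0)` at rate `b1`,
`(1,0)→(0,1)` at rate `b2`, `(1,0)→(0,0)` at rate `b3`, `(1,1)→(1,0)` at rate `b4`. -/
def rateRightA (b1 b2 b3 b4 : ℝ) : (Fin 2 → Fin 2) → (Fin 2 → Fin 2) → ℝ :=
  fun τ τ' =>
    if τ = ![0, 1] ∧ τ' = ![0, 0] then b1
    else if τ = ![1, 0] ∧ τ' = ![0, 1] then b2
    else if τ = ![1, 0] ∧ τ' = ![0, 0] then b3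
    else if τ = ![1, 1] ∧ τ' = ![1, 0] then b4
    else 0

/-!
Every summand of the Hamiltonian rewrites only a window of consecutive sites, so on a product
function it acts as multiplication by a function of the pattern seen in that window. For model A
the bulk moves conserve the number of particles, so this function is the escape rate minus the
entrance rate: in occupation numbers `n₀ n₁ n₂` it equals
`p1 (n₀ - n₁) + p2 (1 - n₁) (n₀ - n₂) = G(n₀, n₁) - G(n₁, n₂)` with
`G(x, y) = p1 x + p2 (1 - (1 - x) (1 - y))`. The bulk sum therefore telescopes to
`G(left end) - G(right end)`, and the boundary rates are such that the two ends contribute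
`c - G(left end)` and `G(right end) - c`, where `c` is the Bernoulli mean of `G`.
-/

lemma prod_eq_prod_comp_mul_prod_compl_image {ι κ M : Type*} [Fintype ι] [Fintype κ]
    [DecidableEq κ] [CommMonoid M] {e : ι → κ} (he : Function.Injective e) (f : κ → M) :
    ∏ k, f k = (∏ i, f (e i)) * ∏ k ∈ (univ.image e)ᶜ, f k := by
  rw [← prod_mul_prod_compl (univ.image e), prod_image he.injOn]

lemma sum_fin_succ_arrow {n : ℕ} {α M : Type*} [Fintype α] [AddCommMonoid M]
    (f : (Fin (n + 1) → α) → M) :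
    ∑ τ, f τ = ∑ s, ∑ τ : Fin n → α, f (Matrix.vecCons s τ) := by
  rw [← (Fin.consEquiv fun _ => α).sum_comp, Fintype.sum_prod_type]
  rfl

/-- The `r` sites starting at site `k`, modulo `L`: the window on which the range-`r` terms of
`Hopen` act. The pattern of a configuration `σ` in it is `σ ∘ windowSite hL r k`. -/
def windowSite {L : ℕ} (hL : 0 < L) (r k : ℕ) : Fin r → Fin L :=
  fun j => ⟨(k + (j : ℕ)) % L, Nat.mod_lt _ hL⟩

/-- The local matrix `h` acts on the product function with one-site weights `w` as multiplication
by `e`. Stated without dividing by the weights, so that these may vanish. -/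
def HasLocalEnergy {m r : ℕ} (h : (Fin r → Fin m) → (Fin r → Fin m) → ℝ) (w : Fin m → ℝ)
    (e : (Fin r → Fin m) → ℝ) : Prop :=
  ∀ a, ∑ τ, h a τ * ∏ j, w (τ j) = e a * ∏ j, w (a j)

section Window

variable {L m r : ℕ} {hL : 0 < L}

lemma windowSite_injective (hr : r ≤ L) (k : ℕ) : Function.Injective (windowSite hL r k) := by
  intro i j hij
  have hmod : k + (i : ℕ) ≡ k + j [MOD L] := congrArg Fin.val hij
  exact Fin.ext ((Nat.ModEq.add_left_cancel' k hmod).eq_of_lt_of_lt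
    (i.isLt.trans_le hr) (j.isLt.trans_le hr))

lemma init_comp_windowSite (σ : Fin L → Fin m) (k : ℕ) :
    Fin.init (σ ∘ windowSite hL (r + 1) k) = σ ∘ windowSite hL r k := rfl

lemma tail_comp_windowSite (σ : Fin L → Fin m) (k : ℕ) :
    Fin.tail (σ ∘ windowSite hL (r + 1) k) = σ ∘ windowSite hL r (k + 1) := by
  funext j
  simp only [Fin.tail, Function.comp_apply, windowSite, Fin.val_succ, Nat.add_right_comm k 1,
    ← Nat.add_assoc]

lemma updateConfig_windowSite (hr : r ≤ L) (σ : Fin L → Fin m) (k : ℕ) (τ : Fin r → Fin m)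
    (j : Fin r) : updateConfig L m r σ k τ (windowSite hL r k j) = τ j := by
  have h : ∃ i : Fin r, (windowSite hL r k j : ℕ) = (k + (i : ℕ)) % L := ⟨j, rfl⟩
  have hchoose : h.choose = j := windowSite_injective (hL := hL) hr k (Fin.ext h.choose_spec.symm)
  rw [updateConfig, dif_pos h, hchoose]

lemma updateConfig_of_forall_ne {i : Fin L} {k : ℕ} (hi : ∀ j, windowSite hL r k j ≠ i)
    (σ : Fin L → Fin m) (τ : Fin r → Fin m) : updateConfig L m r σ k τ i = σ i :=
  dif_neg fun ⟨j, hj⟩ => hi j (Fin.ext hj.symm)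

lemma prod_updateConfig {M : Type*} [CommMonoid M] (hr : r ≤ L) (w : Fin m → M)
    (σ : Fin L → Fin m) (k : ℕ) (τ : Fin r → Fin m) :
    ∏ i, w (updateConfig L m r σ k τ i) =
      (∏ j, w (τ j)) * ∏ i ∈ (univ.image (windowSite hL r k))ᶜ, w (σ i) := by
  rw [prod_eq_prod_comp_mul_prod_compl_image (windowSite_injective (hL := hL) hr k)]
  congr 1
  · simp only [updateConfig_windowSite hr]
  · refine prod_congr rfl fun i hi => ?_
    have hne : ∀ j, windowSite hL r k j ≠ i := by simpa using hi
    rw [updateConfig_of_forall_ne hne]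

lemma HasLocalEnergy.sum_mul_prod_updateConfig {h : (Fin r → Fin m) → (Fin r → Fin m) → ℝ}
    {w : Fin m → ℝ} {e : (Fin r → Fin m) → ℝ} (he : HasLocalEnergy h w e) (hr : r ≤ L)
    (σ : Fin L → Fin m) (k : ℕ) :
    ∑ τ, h (σ ∘ windowSite hL r k) τ * ∏ i, w (updateConfig L m r σ k τ i) =
      e (σ ∘ windowSite hL r k) * ∏ i, w (σ i) := by
  simp only [prod_updateConfig (hL := hL) hr, ← mul_assoc, ← sum_mul]
  rw [he, prod_eq_prod_comp_mul_prod_compl_image (windowSite_injective (hL := hL) hr k), mul_assoc]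
  rfl

end Window

theorem Hopen_prod_eq_zero_of_telescoping {L m n : ℕ} (hnL : n + 1 ≤ L)
    {hb : (Fin (n + 1) → Fin m) → (Fin (n + 1) → Fin m) → ℝ}
    {hl hr : (Fin n → Fin m) → (Fin n → Fin m) → ℝ} {w : Fin m → ℝ}
    {G : (Fin n → Fin m) → ℝ} {c : ℝ}
    (hbulk : HasLocalEnergy hb w fun a => G (Fin.init a) - G (Fin.tail a))
    (hleft : HasLocalEnergy hl w fun a => c - G a)
    (hright : HasLocalEnergy hr w fun a => G a - c) :
    Hopen L m (n + 1) (by omega) hb hl hr (fun σ => ∏ k, w (σ k)) = 0 := by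
  funext σ
  have hL : 0 < L := by omega
  have n_le : n ≤ L := by omega
  let g : ℕ → ℝ := fun k => G (σ ∘ windowSite hL n k)
  have bulk_sum : ∑ k ∈ range (L - (n + 1) + 1), ∑ τ,
      hb (σ ∘ windowSite hL (n + 1) k) τ * ∏ i, w (updateConfig L m (n + 1) σ k τ i) =
      (g 0 - g (L - n)) * ∏ i, w (σ i) := by
    simp only [hbulk.sum_mul_prod_updateConfig hnL, init_comp_windowSite, tail_comp_windowSite]
    rw [← sum_mul, sum_range_sub' g, show L - (n + 1) + 1 = L - n by omega]
  have left_sum := hleft.sum_mul_prod_updateConfig (hL := hL) n_le σ 0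
  have right_sum := hright.sum_mul_prod_updateConfig (hL := hL) n_le σ (L - n)
  have left_window : σ ∘ windowSite hL n 0 = fun j : Fin n => σ ⟨(j : ℕ) % L, Nat.mod_lt _ hL⟩ := by
    simp only [windowSite, Nat.zero_add, Function.comp_def]
  calc Hopen L m (n + 1) hL hb hl hr (fun σ => ∏ k, w (σ k)) σ
      = (c - g 0) * ∏ i, w (σ i) + (g 0 - g (L - n)) * ∏ i, w (σ i)
          + (g (L - n) - c) * ∏ i, w (σ i) := by
        rw [← left_sum, ← bulk_sum, ← right_sum, left_window]
        rfl
    _ = 0 := by ring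

lemma sum_rateToH_mul {m r : ℕ} (w : (Fin r → Fin m) → (Fin r → Fin m) → ℝ) (a : Fin r → Fin m)
    (f : (Fin r → Fin m) → ℝ) :
    ∑ τ, rateToH w a τ * f τ = ∑ τ, (w a τ * f a - w τ a * f τ) := by
  have off_diagonal : ∀ τ ∈ univ.erase a, rateToH w a τ * f τ = -(w τ a * f τ) := by
    intro τ hτ
    rw [rateToH, if_neg (ne_of_mem_erase hτ).symm, neg_mul]
  rw [← add_sum_erase _ _ (mem_univ a), ← add_sum_erase _ _ (mem_univ a),
    sum_congr rfl off_diagonal, rateToH, if_pos rfl, filter_ne', sum_neg_distrib,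
    sum_sub_distrib, sum_mul]
  ring

section ModelA

/-- The one-site weight of the Bernoulli measure of density `ρ`. -/
def bernoulliWeight (ρ : ℝ) (s : Fin 2) : ℝ := if s = 1 then ρ else 1 - ρ

/-- The function `G` whose difference between neighbouring pairs of sites is the local energy of
the bulk of model A. -/
def pairPotential (p1 p2 : ℝ) (a : Fin 2 → Fin 2) : ℝ :=
  (if a 0 = 1 then p1 else 0) + (if a 0 = 1 ∨ a 1 = 1 then p2 else 0)

/-- The mean of `pairPotential p1 p2` under the Bernoulli measure of density `ρ`. -/
def meanPairPotential (p1 p2 ρ : ℝ) : ℝ := p1 * ρ + p2 * (1 - (1 - ρ) ^ 2)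

variable (p1 p2 ρ : ℝ)

lemma hasLocalEnergy_hA : HasLocalEnergy (hA p1 p2) (bernoulliWeight ρ)
    fun a => pairPotential p1 p2 (Fin.init a) - pairPotential p1 p2 (Fin.tail a) := by
  intro a
  rw [hA, sum_rateToH_mul]
  obtain ⟨x, y, z, rfl⟩ : ∃ x y z, a = ![x, y, z] := ⟨_, _, _, (FinVec.etaExpand_eq a).symm⟩
  fin_cases x <;> fin_cases y <;> fin_cases z <;>
    simp [-mul_eq_mul_left_iff, -mul_eq_mul_right_iff, eq_iff_true_of_subsingleton,
      sum_fin_succ_arrow, rateA, bernoulliWeight, pairPotential, Fin.init, Fin.tail,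
      Fin.prod_univ_succ] <;>
    ring

lemma hasLocalEnergy_rateLeftA :
    HasLocalEnergy
      (rateToH (rateLeftA (p1 * ρ + p2 * ρ * (1 - ρ)) (p2 * ρ) (p1 * ρ + p2 * ρ * (1 - ρ))))
      (bernoulliWeight ρ) fun a => meanPairPotential p1 p2 ρ - pairPotential p1 p2 a := by
  intro a
  rw [sum_rateToH_mul]
  obtain ⟨x, y, rfl⟩ : ∃ x y, a = ![x, y] := ⟨_, _, (FinVec.etaExpand_eq a).symm⟩
  fin_cases x <;> fin_cases y <;>
    simp [-mul_eq_mul_left_iff, -mul_eq_mul_right_iff, eq_iff_true_of_subsingleton,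
      sum_fin_succ_arrow, rateLeftA, bernoulliWeight, pairPotential, meanPairPotential] <;>
    ring

lemma hasLocalEnergy_rateRightA (β3 : ℝ) :
    HasLocalEnergy
      (rateToH (rateRightA (-β3 + p1 * (1 - ρ) + p2 * (1 - ρ) * (1 + (1 - ρ)))
        (-β3 + p1 + p2 * (1 - ρ)) β3 (p1 * (1 - ρ) + p2 * (1 - ρ) ^ 2)))
      (bernoulliWeight ρ) fun a => pairPotential p1 p2 a - meanPairPotential p1 p2 ρ := by
  intro a
  rw [sum_rateToH_mul]
  obtain ⟨x, y, rfl⟩ : ∃ x y, a = ![x, y] := ⟨_, _, (FinVec.etaExpand_eq a).symm⟩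
  fin_cases x <;> fin_cases y <;>
    simp [-mul_eq_mul_left_iff, -mul_eq_mul_right_iff, eq_iff_true_of_subsingleton,
      sum_fin_succ_arrow, rateRightA, bernoulliWeight, pairPotential, meanPairPotential] <;>
    ring

end ModelA

theorem modelA_open_product_measure_general (p1 p2 ρ β3 : ℝ)
    (E D α1 α2 α3 β1 β2 β4 : ℝ)
    (hE : E = 1 - ρ) (hD : D = ρ)
    (ha1 : α1 = p1 * D + p2 * D * E)
    (ha2 : α2 = p2 * D)
    (ha3 : α3 = α1)
    (hb1 : β1 = -β3 + p1 * E + p2 * E * (1 + E))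
    (hb2 : β2 = -β3 + p1 + p2 * E)
    (hb4 : β4 = p1 * E + p2 * E ^ 2)
    (L : ℕ) (hL : 3 ≤ L) :
    Hopen L 2 3 (by omega) (hA p1 p2)
      (rateToH (rateLeftA α1 α2 α3)) (rateToH (rateRightA β1 β2 β3 β4))
      (fun σ => ∏ k : Fin L, (if σ k = 1 then ρ else 1 - ρ)) = 0 := by
  subst ha3 ha1 ha2 hb1 hb2 hb4 hE hD
  exact Hopen_prod_eq_zero_of_telescoping (n := 2) (w := bernoulliWeight D) hL
    (hasLocalEnergy_hA p1 p2 D) (hasLocalEnergy_rateLeftA p1 p2 D)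
    (hasLocalEnergy_rateRightA p1 p2 D β3)

/-- **Exactly solvable line of model A with open boundaries**: with the boundary rates
`α1 = p1 D + p2 D E`, `α2 = p2 D`, `α3 = α1`, `β1 = -β3 + p1 E + p2 E(1+E)`,
`β2 = -β3 + p1 + p2 E`, `β4 = p1 E + p2 E²` (where `D = ρ`, `E = 1-ρ`), the Bernoulli
product measure with density `ρ` is a zero-energy eigenvector of the open-chain
stochastic Hamiltonian of model A for every `L ≥ 4`. -/
theorem modelA_open_product_measure (p1 p2 ρ β3 : ℝ) (hp1 : 0 ≤ p1) (hp2 : 0 ≤ p2)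
    (hρ : ρ ∈ Set.Ioo (0 : ℝ) 1)
    (E D α1 α2 α3 β1 β2 β4 : ℝ)
    (hE : E = 1 - ρ) (hD : D = ρ)
    (ha1 : α1 = p1 * D + p2 * D * E)
    (ha2 : α2 = p2 * D)
    (ha3 : α3 = α1)
    (hb1 : β1 = -β3 + p1 * E + p2 * E * (1 + E))
    (hb2 : β2 = -β3 + p1 + p2 * E)
    (hb4 : β4 = p1 * E + p2 * E ^ 2)
    (L : ℕ) (hL : 4 ≤ L) :
    Hopen L 2 3 (by omega) (hA p1 p2)
      (rateToH (rateLeftA α1 α2 α3)) (rateToH (rateRightA β1 β2 β3 β4))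
      (fun σ => ∏ k : Fin L, (if σ k = 1 then ρ else 1 - ρ)) = 0 := by
  exact modelA_open_product_measure_general p1 p2 ρ β3 E D α1 α2 α3 β1 β2 β4 hE hD ha1 ha2 ha3
    hb1 hb2 hb4 L (by omega)
end
end

section
/- (Sufficient relations for a representation of the bulk algebra of model B.) Let A be an associative ℝ-algebra, E, D ∈ A, and e, d, λ, x real numbers with d ≠ 0. Suppose E² = e·E, D² = d·D, and λ·D·E·D = e·d·D. Define X11 = (e/d)·(d+x)·E, X12 = e·D + (x/d)·E·D, X21 = (x/d)·D·E, X22 = x·D. Then the eight bulk relations of model B hold: X11·E = E·X11; D·E·E = X12·E − E·X21; −D·E·E = X21·E − D·X11; X22·E = D·X21; X11·D = E·X12; λ·D·E·D = X12·D − E·X22; −λ·D·E·D = X21·D − D·X12; and X22·D = D·X22. -/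
/-! The bulk relations say that the defect `Y i j * X k - X i * Y j k`, which telescopes along the
lattice, equals the net probability flow of the process. The defect is additive in `Y`, and by
associativity it vanishes on the products `X i * X j`. It therefore suffices to find one solution:
with `X = (E, D)`, take `Y 0 j = e • X j` and `Y 1 j = 0`. Adding `(x / d) • (X i * X j)` to
it produces the family with free parameter `x`. -/

open Matrix

section CancellingDefect

variable {ι A : Type*}

/-- The telescoping side of the cancelling mechanism for range 3: `X i` represents the local
state `i`, and `Y i j` is the auxiliary element attached to neighbouring sites in states `i, j`. -/
def cancellingDefect [NonUnitalNonAssocRing A] (X : ι → A) (Y : Matrix ι ι A) (i j k : ι) : A :=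
  Y i j * X k - X i * Y j k

theorem cancellingDefect_add [NonUnitalNonAssocRing A] (X : ι → A) (Y Z : Matrix ι ι A) :
    cancellingDefect X (Y + Z) = cancellingDefect X Y + cancellingDefect X Z := by
  funext i j k
  simp only [cancellingDefect, Matrix.add_apply, Pi.add_apply, add_mul, mul_add]
  abel

theorem cancellingDefect_smul_vecMulVec_self {R : Type*} [NonUnitalRing A] [SMul R A]
    [IsScalarTower R A A] [SMulCommClass R A A] (X : ι → A) (y : R) :
    cancellingDefect X (y • vecMulVec X X) = 0 := by
  funext i j k
  simp only [cancellingDefect, Matrix.smul_apply, vecMulVec_apply, smul_mul_assoc,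
    mul_smul_comm, mul_assoc, sub_self, Pi.zero_apply]

end CancellingDefect

namespace ModelB

variable {R A : Type*} [NonUnitalNonAssocRing A]

/-- The right-hand side of the bulk relations: gain minus loss of each three-site configuration
under the transitions of model B, with `E` in place of the state `0` and `D` of the state `1`. -/
def netFlow [SMul R A] (lam : R) (E D : A) : Fin 2 → Fin 2 → Fin 2 → A
  | 0, 1, 0 => D * E * E
  | 1, 0, 0 => -(D * E * E)
  | 0, 1, 1 => lam • (D * E * D)
  | 1, 0, 1 => -(lam • (D * E * D))
  | _, _, _ => 0

theorem cancellingDefect_eq_netFlow_iff [SMul R A] {lam : R} {E D X11 X12 X21 X22 : A} :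
    cancellingDefect ![E, D] !![X11, X12; X21, X22] = netFlow lam E D ↔
      (X11 * E = E * X11)
      ∧ (D * E * E = X12 * E - E * X21)
      ∧ (-(D * E * E) = X21 * E - D * X11)
      ∧ (X22 * E = D * X21)
      ∧ (X11 * D = E * X12)
      ∧ (lam • (D * E * D) = X12 * D - E * X22)
      ∧ (-(lam • (D * E * D)) = X21 * D - D * X12)
      ∧ (X22 * D = D * X22) := by
  simp only [funext_iff, Fin.forall_fin_two, cancellingDefect, netFlow, of_apply, cons_val',
    cons_val_fin_one, cons_val_zero, cons_val_one, Fin.isValue, sub_eq_zero]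
  grind

theorem cancellingDefect_eq_netFlow [SMul R A] [IsScalarTower R A A] [SMulCommClass R A A]
    {E D : A} {e lam : R} (hDEE : D * E * E = e • (D * E))
    (hDED : lam • (D * E * D) = e • (D * D)) :
    cancellingDefect ![E, D] !![e • E, e • D; 0, 0] = netFlow lam E D := by
  simp only [cancellingDefect_eq_netFlow_iff, smul_mul_assoc, mul_smul_comm, zero_mul, mul_zero,
    sub_zero, zero_sub, hDEE, hDED, and_self]

theorem smul_eq_smul_add_smul_mul_self {K : Type*} [Field K] [Module K A] {E : A} {e d x : K}
    (hd : d ≠ 0) (hE : E * E = e • E) :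
    (e / d * (d + x)) • E = e • E + (x / d) • (E * E) := by
  rw [hE, smul_smul, ← add_smul]
  congr 1
  field_simp

end ModelB

theorem modelB_bulk_algebra_rep_general {R A : Type*} [NonUnitalRing A] [SMul R A]
    [IsScalarTower R A A] [SMulCommClass R A A] (E D : A) (e lam y : R)
    (hDEE : D * E * E = e • (D * E)) (hDED : lam • (D * E * D) = e • (D * D))
    (X11 X12 X21 X22 : A)
    (h11 : X11 = e • E + y • (E * E))
    (h12 : X12 = e • D + y • (E * D))
    (h21 : X21 = y • (D * E))
    (h22 : X22 = y • (D * D)) :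
    (X11 * E = E * X11)
    ∧ (D * E * E = X12 * E - E * X21)
    ∧ (-(D * E * E) = X21 * E - D * X11)
    ∧ (X22 * E = D * X21)
    ∧ (X11 * D = E * X12)
    ∧ (lam • (D * E * D) = X12 * D - E * X22)
    ∧ (-(lam • (D * E * D)) = X21 * D - D * X12)
    ∧ (X22 * D = D * X22) := by
  have decomposition : !![X11, X12; X21, X22] =
      !![e • E, e • D; 0, 0] + y • vecMulVec ![E, D] ![E, D] := by
    ext i j
    fin_cases i <;> fin_cases j <;> simp [h11, h12, h21, h22]
  rw [← ModelB.cancellingDefect_eq_netFlow_iff, decomposition, cancellingDefect_add,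
    cancellingDefect_smul_vecMulVec_self, add_zero, ModelB.cancellingDefect_eq_netFlow hDEE hDED]

/-- **Sufficient relations for a representation of the bulk algebra of model B**: in any
associative ℝ-algebra, if `E² = e·E`, `D² = d·D` and `λ·D·E·D = e·d·D`, then with
`X11 = (e/d)(d+x)·E`, `X12 = e·D + (x/d)·E·D`, `X21 = (x/d)·D·E`, `X22 = x·D`,
the eight bulk cancelling-mechanism relations of model B hold. -/
theorem modelB_bulk_algebra_rep {A : Type*} [Ring A] [Algebra ℝ A]
    (E D : A) (e d lam x : ℝ) (hd : d ≠ 0)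
    (hE : E * E = e • E) (hD : D * D = d • D)
    (hDED : lam • (D * E * D) = (e * d) • D)
    (X11 X12 X21 X22 : A)
    (h11 : X11 = (e / d * (d + x)) • E)
    (h12 : X12 = e • D + (x / d) • (E * D))
    (h21 : X21 = (x / d) • (D * E))
    (h22 : X22 = x • D) :
    (X11 * E = E * X11)
    ∧ (D * E * E = X12 * E - E * X21)
    ∧ (-(D * E * E) = X21 * E - D * X11)
    ∧ (X22 * E = D * X21)
    ∧ (X11 * D = E * X12)
    ∧ (lam • (D * E * D) = X12 * D - E * X22)
    ∧ (-(lam • (D * E * D)) = X21 * D - D * X12)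
    ∧ (X22 * D = D * X22) := by
  exact modelB_bulk_algebra_rep_general E D e lam (x / d) (by rw [mul_assoc, hE, mul_smul_comm])
    (by rw [hDED, hD, smul_smul]) X11 X12 X21 X22
    (h11.trans (ModelB.smul_eq_smul_add_smul_mul_self hd hE)) h12 h21
    (by rw [h22, hD, smul_smul, div_mul_cancel₀ x hd])
end

section
/- (Fundamental diagram of model B.) Let λ ∈ (0,1) and e, d > 0 with e·d = λ/(1−λ), and let E = [[e,1],[0,0]], D = [[d,0],[1,0]] (2×2 real matrices), C = E + D. Then the limits ρ = lim_{L→∞} Trace(D·C^{L−1}) / Trace(C^L) and J = lim_{L→∞} [Trace(D·E·E·C^{L−3}) + λ·Trace(D·E·D·C^{L−3})] / Trace(C^L) exist, ρ ∈ (0,1), and they satisfy J = ρ·[1 − (1 − √(1 − 4(1−λ)·ρ·(1−ρ))) / (2(1−λ)(1−ρ))]. -/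
open Filter Matrix

/-!
The matrix `C = E + D = [[e + d, 1], [1, 0]]` has eigenvalues `r` and `-r⁻¹`, and `e + d ≠ 0` lets
us choose `1 < r ^ 2`. Hence `r⁻ᴸ C ^ L` converges to the spectral projection onto the eigenline of
`r`, which has trace `1`, and every ratio of traces converges; in particular
`ρ = (d r + 1) / (r ^ 2 + 1)`.

For the flow, `E ^ 2 = e E`, `D ^ 2 = d D` and `D E D = (1 + e d) D` turn `D E E + λ D E D` into
`e D C`, so that `J = e ρ / r`. The diagram is then obtained by eliminating `r`: the discriminant
`1 - 4 (1 - λ) ρ (1 - ρ)` is the square of `(r ^ 2 - 1) / (r ^ 2 + 1)`.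
-/

section Algebra

lemma pow_mul_eq_pow_smul {R A : Type*} [Monoid R] [Monoid A] [MulAction R A]
    [SMulCommClass R A A] {x y : A} {a : R} (h : x * y = a • y) (n : ℕ) :
    x ^ n * y = a ^ n • y := by
  induction n with
  | zero => simp
  | succ n ih => rw [pow_succ, mul_assoc, h, mul_smul_comm, ih, smul_smul, pow_succ']

variable {R A : Type*} [CommRing R] [Ring A] [Algebra R A]

lemma sub_smul_pow_of_sub_mul_sub_eq_zero {x : A} {a b : R}
    (h : (x - algebraMap R A a) * (x - algebraMap R A b) = 0) (n : ℕ) :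
    (a - b) • x ^ n = a ^ n • (x - algebraMap R A b) - b ^ n • (x - algebraMap R A a) := by
  have h' : (x - algebraMap R A b) * (x - algebraMap R A a) = 0 := by
    rw [← h]
    exact ((Commute.refl x).sub_left (Algebra.commute_algebraMap_left b x)).sub_right
      (Algebra.commute_algebraMap_right a _)
  have ha : x * (x - algebraMap R A b) = a • (x - algebraMap R A b) := by
    rwa [Algebra.smul_def, ← sub_eq_zero, ← sub_mul]
  have hb : x * (x - algebraMap R A a) = b • (x - algebraMap R A a) := by
    rwa [Algebra.smul_def, ← sub_eq_zero, ← sub_mul]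
  rw [← pow_mul_eq_pow_smul ha, ← pow_mul_eq_pow_smul hb, ← mul_sub, sub_sub_sub_cancel_left,
    ← map_sub, ← Algebra.commutes, Algebra.smul_def]

lemma mul_mul_add_smul_mul_mul_eq_smul_mul_add {E D : A} {e d lam : R} (hE : E * E = e • E)
    (hD : D * D = d • D) (hDED : D * E * D = (1 + e * d) • D)
    (hlam : (1 - lam) * (1 + e * d) = 1) :
    D * E * E + lam • (D * E * D) = e • (D * (E + D)) := by
  have hrate : lam * (1 + e * d) = e * d := by linear_combination -hlam
  rw [mul_assoc, hE, hDED, smul_smul, hrate, mul_add, hD, smul_add, smul_smul, mul_smul_comm]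

end Algebra

lemma tendsto_inv_pow_smul_pow {𝕜 A : Type*} [NormedField 𝕜] [Ring A] [Algebra 𝕜 A]
    [TopologicalSpace A] [IsTopologicalAddGroup A] [ContinuousSMul 𝕜 A] {x : A} {a b : 𝕜}
    (h : (x - algebraMap 𝕜 A a) * (x - algebraMap 𝕜 A b) = 0) (hab : ‖b‖ < ‖a‖) :
    Tendsto (fun n : ℕ => a⁻¹ ^ n • x ^ n) atTop
      (nhds ((a - b)⁻¹ • (x - algebraMap 𝕜 A b))) := by
  have ha : a ≠ 0 := norm_pos_iff.mp ((norm_nonneg b).trans_lt hab)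
  have hsub : a - b ≠ 0 := sub_ne_zero.mpr fun hEq => hab.ne (congrArg norm hEq.symm)
  have hratio : Tendsto (fun n : ℕ => (a⁻¹ * b) ^ n) atTop (nhds 0) := by
    refine tendsto_pow_atTop_nhds_zero_of_norm_lt_one ?_
    rwa [norm_mul, norm_inv, inv_mul_lt_one₀ (norm_pos_iff.mpr ha)]
  have hlim := ((hratio.smul_const (x - algebraMap 𝕜 A a)).const_sub
    (x - algebraMap 𝕜 A b)).const_smul (a - b)⁻¹
  rw [zero_smul, sub_zero] at hlim
  refine hlim.congr fun n => ?_
  rw [inv_smul_eq_iff₀ hsub, smul_comm, sub_smul_pow_of_sub_mul_sub_eq_zero h,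
    smul_sub (a⁻¹ ^ n), smul_smul, smul_smul, ← mul_pow, ← mul_pow, inv_mul_cancel₀ ha, one_pow,
    one_smul]

section Matrix

lemma tendsto_trace_mul_pow_sub_div_trace_pow {n 𝕜 : Type*} [Fintype n] [DecidableEq n] [Field 𝕜]
    [TopologicalSpace 𝕜] [IsTopologicalDivisionRing 𝕜] {C P : Matrix n n 𝕜} {a : 𝕜} (ha : a ≠ 0)
    (hP : Tendsto (fun L : ℕ => a⁻¹ ^ L • C ^ L) atTop (nhds P)) (htr : P.trace ≠ 0)
    (X : Matrix n n 𝕜) (k : ℕ) :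
    Tendsto (fun L : ℕ => (X * C ^ (L - k)).trace / (C ^ L).trace) atTop
      (nhds ((X * P).trace / (a ^ k * P.trace))) := by
  have htrace : Continuous (trace : Matrix n n 𝕜 → 𝕜) := continuous_id.matrix_trace
  have hnum := (htrace.tendsto _).comp ((hP.comp (tendsto_sub_atTop_nat k)).const_mul X)
  have hden := ((htrace.tendsto _).comp hP).const_mul (a ^ k)
  refine (hnum.div hden (mul_ne_zero (pow_ne_zero k ha) htr)).congr' ?_
  filter_upwards [eventually_ge_atTop k] with L hL
  have hscale : a ^ k * a⁻¹ ^ L = a⁻¹ ^ (L - k) := by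
    rw [← Nat.sub_add_cancel hL, Nat.add_sub_cancel, pow_add, mul_left_comm, ← mul_pow,
      mul_inv_cancel₀ ha, one_pow, mul_one]
  simp only [Pi.div_apply, Function.comp_apply, mul_smul_comm, trace_smul, smul_eq_mul]
  rw [← mul_assoc, hscale, mul_div_mul_left _ _ (pow_ne_zero _ (inv_ne_zero ha))]

lemma sub_mul_sub_eq_zero_of_trace_of_det {R : Type*} [CommRing R] {C : Matrix (Fin 2) (Fin 2) R}
    {a b : R} (htr : C.trace = a + b) (hdet : C.det = a * b) :
    (C - algebraMap R _ a) * (C - algebraMap R _ b) = 0 := by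
  nontriviality R
  have hCH := C.aeval_self_charpoly
  simp only [charpoly_fin_two, htr, hdet, map_add, map_sub, map_mul, map_pow, Polynomial.aeval_X,
    Polynomial.aeval_C] at hCH
  rw [← hCH]
  simp only [sub_mul, mul_sub, add_mul, sq, Algebra.commutes b C]
  abel

lemma tendsto_trace_mul_pow_sub_div_trace_pow_fin_two {𝕜 : Type*} [NormedField 𝕜]
    {C : Matrix (Fin 2) (Fin 2) 𝕜} {a b : 𝕜} (htr : C.trace = a + b) (hdet : C.det = a * b)
    (hab : ‖b‖ < ‖a‖) (X : Matrix (Fin 2) (Fin 2) 𝕜) (k : ℕ) :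
    Tendsto (fun L : ℕ => (X * C ^ (L - k)).trace / (C ^ L).trace) atTop
      (nhds (((X * C).trace - b * X.trace) / ((a - b) * a ^ k))) := by
  have ha : a ≠ 0 := norm_pos_iff.mp ((norm_nonneg b).trans_lt hab)
  have hsub : a - b ≠ 0 := sub_ne_zero.mpr fun hEq => hab.ne (congrArg norm hEq.symm)
  have hP := tendsto_inv_pow_smul_pow (sub_mul_sub_eq_zero_of_trace_of_det htr hdet) hab
  have htrP : ((a - b)⁻¹ • (C - algebraMap 𝕜 _ b)).trace = 1 := by
    rw [trace_smul, trace_sub, htr, Algebra.algebraMap_eq_smul_one, trace_smul, trace_one,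
      Fintype.card_fin, smul_eq_mul, smul_eq_mul, inv_mul_eq_one₀ hsub]
    push_cast
    ring
  have htrXP : (X * ((a - b)⁻¹ • (C - algebraMap 𝕜 _ b))).trace
      = ((X * C).trace - b * X.trace) / (a - b) := by
    rw [mul_smul_comm, trace_smul, smul_eq_mul, mul_sub, trace_sub, ← Algebra.commutes,
      ← Algebra.smul_def, trace_smul, smul_eq_mul, inv_mul_eq_div]
  have hlim := tendsto_trace_mul_pow_sub_div_trace_pow ha hP (by rw [htrP]; exact one_ne_zero) X k
  rwa [htrP, htrXP, mul_one, div_div] at hlim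

end Matrix

lemma ne_zero_of_sq_eq_mul_add_one {R : Type*} [Semiring R] [Nontrivial R] {s r : R}
    (hr : r ^ 2 = s * r + 1) : r ≠ 0 := by
  rintro rfl
  simp at hr

lemma exists_one_lt_sq_and_sq_eq_mul_add_one {s : ℝ} (hs : s ≠ 0) :
    ∃ r : ℝ, 1 < r ^ 2 ∧ r ^ 2 = s * r + 1 := by
  wlog hpos : 0 < s generalizing s
  · obtain ⟨r, hr_gt, hr⟩ :=
      this (neg_ne_zero.mpr hs) (neg_pos.mpr (lt_of_le_of_ne (not_lt.mp hpos) hs))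
    exact ⟨-r, by rwa [neg_sq], by linear_combination hr⟩
  have hsqrt : √(s ^ 2 + 4) ^ 2 = s ^ 2 + 4 := Real.sq_sqrt (by positivity)
  have hroot : ((s + √(s ^ 2 + 4)) / 2) ^ 2 = s * ((s + √(s ^ 2 + 4)) / 2) + 1 := by
    linear_combination hsqrt / 4
  refine ⟨(s + √(s ^ 2 + 4)) / 2, ?_, hroot⟩
  rw [hroot, lt_add_iff_pos_left]
  positivity

/-- The thermodynamic-limit density `ρ` of model B, parametrised by the entry `d` of the particle
matrix `D` and the dominant eigenvalue `r` of `C`. By particle-hole symmetry, replacing `d` by `e`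
gives the density of holes. -/
noncomputable def modelBDensity (d r : ℝ) : ℝ := (d * r + 1) / (r ^ 2 + 1)

section Density

variable {e d lam r : ℝ}

lemma one_sub_modelBDensity (hr : r ^ 2 = (e + d) * r + 1) :
    1 - modelBDensity d r = modelBDensity e r := by
  unfold modelBDensity
  field_simp
  linear_combination hr

lemma mul_mul_add_one_mul_mul_add_one (hlam : (1 - lam) * (1 + e * d) = 1)
    (hr : r ^ 2 = (e + d) * r + 1) : (1 - lam) * (d * r + 1) * (e * r + 1) = r ^ 2 := by
  linear_combination r ^ 2 * hlam - (1 - lam) * hr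

lemma mul_modelBDensity_mul_modelBDensity (hlam : (1 - lam) * (1 + e * d) = 1)
    (hr : r ^ 2 = (e + d) * r + 1) :
    (1 - lam) * (modelBDensity d r * modelBDensity e r) = (r / (r ^ 2 + 1)) ^ 2 := by
  unfold modelBDensity
  field_simp
  linear_combination mul_mul_add_one_mul_mul_add_one hlam hr

lemma modelBDensity_mem_Ioo (hlam_lt : lam < 1) (hlam : (1 - lam) * (1 + e * d) = 1)
    (hr : r ^ 2 = (e + d) * r + 1) : modelBDensity d r ∈ Set.Ioo (0 : ℝ) 1 := by
  have hr₀ : r ≠ 0 := ne_zero_of_sq_eq_mul_add_one hr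
  have hprod : 0 < modelBDensity d r * (1 - modelBDensity d r) := by
    rw [one_sub_modelBDensity hr]
    refine pos_of_mul_pos_right ?_ (sub_pos.mpr hlam_lt).le
    rw [mul_modelBDensity_mul_modelBDensity hlam hr]
    positivity
  constructor <;> nlinarith

lemma sqrt_one_sub_four_mul_modelBDensity (hlam : (1 - lam) * (1 + e * d) = 1)
    (hr_ge : 1 ≤ r ^ 2) (hr : r ^ 2 = (e + d) * r + 1) :
    √(1 - 4 * (1 - lam) * modelBDensity d r * (1 - modelBDensity d r))
      = (r ^ 2 - 1) / (r ^ 2 + 1) := by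
  have hdisc : 1 - 4 * (1 - lam) * modelBDensity d r * (1 - modelBDensity d r)
      = ((r ^ 2 - 1) / (r ^ 2 + 1)) ^ 2 := calc
    _ = 1 - 4 * ((1 - lam) * (modelBDensity d r * modelBDensity e r)) := by
      rw [one_sub_modelBDensity hr]; ring
    _ = 1 - 4 * (r / (r ^ 2 + 1)) ^ 2 := by rw [mul_modelBDensity_mul_modelBDensity hlam hr]
    _ = ((r ^ 2 - 1) / (r ^ 2 + 1)) ^ 2 := by field_simp; ring
  rw [hdisc, Real.sqrt_sq (div_nonneg (sub_nonneg.mpr hr_ge) (by positivity))]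

lemma one_sub_sqrt_div_modelBDensity (hlam : (1 - lam) * (1 + e * d) = 1)
    (hr_ge : 1 ≤ r ^ 2) (hr : r ^ 2 = (e + d) * r + 1) :
    1 - (1 - √(1 - 4 * (1 - lam) * modelBDensity d r * (1 - modelBDensity d r)))
      / (2 * (1 - lam) * (1 - modelBDensity d r)) = e / r := by
  have hr₀ : r ≠ 0 := ne_zero_of_sq_eq_mul_add_one hr
  have hlam₀ : 1 - lam ≠ 0 := left_ne_zero_of_mul (hlam ▸ one_ne_zero)
  have hprod := mul_mul_add_one_mul_mul_add_one hlam hr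
  have hhole : r * e + 1 ≠ 0 := by
    rw [mul_comm]
    exact right_ne_zero_of_mul (hprod ▸ pow_ne_zero 2 hr₀)
  have hquot : (1 - (r ^ 2 - 1) / (r ^ 2 + 1)) / (2 * (1 - lam) * modelBDensity e r)
      = (d * r + 1) / r ^ 2 := by
    unfold modelBDensity
    field_simp
    linear_combination -2 * hprod
  rw [sqrt_one_sub_four_mul_modelBDensity hlam hr_ge hr, one_sub_modelBDensity hr, hquot]
  field_simp
  linear_combination hr

end Density

section TraceRatios

variable {e d lam r : ℝ}

lemma tendsto_trace_particle_mul_pow_sub_div_trace_pow (hr_gt : 1 < r ^ 2)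
    (hr : r ^ 2 = (e + d) * r + 1) {E D C : Matrix (Fin 2) (Fin 2) ℝ}
    (hE : E = !![e, 1; 0, 0]) (hD : D = !![d, 0; 1, 0]) (hC : C = E + D) (k : ℕ) :
    Tendsto (fun L : ℕ => (D * C ^ (L - k)).trace / (C ^ L).trace)
      atTop (nhds (modelBDensity d r * r / r ^ k)) := by
  have hr₀ : r ≠ 0 := ne_zero_of_sq_eq_mul_add_one hr
  have habs : 1 < |r| := (one_lt_sq_iff_one_lt_abs r).mp hr_gt
  have htr : C.trace = r + -r⁻¹ := by
    simp only [hC, hE, hD, trace_add, trace_fin_two_of, add_zero]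
    field_simp
    linear_combination -hr
  have hdet : C.det = r * -r⁻¹ := by
    simp [hC, hE, hD, det_fin_two, hr₀]
  have hgap : ‖-r⁻¹‖ < ‖r‖ := by
    rw [norm_neg, norm_inv, Real.norm_eq_abs]
    exact (inv_lt_one_of_one_lt₀ habs).trans habs
  have hDC : (D * C).trace = d * (e + d) + 1 := by
    simp [hC, hE, hD, trace_fin_two]
  have hD_tr : D.trace = d := by
    simp [hD, trace_fin_two]
  have hval : ((D * C).trace - -r⁻¹ * D.trace) / (r - -r⁻¹) = modelBDensity d r * r := by
    have hden : r - -r⁻¹ = (r ^ 2 + 1) / r := by field_simp; ring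
    rw [hDC, hD_tr, hden, modelBDensity]
    field_simp
    linear_combination -d * hr
  simpa only [← div_div, hval] using
    tendsto_trace_mul_pow_sub_div_trace_pow_fin_two htr hdet hgap D k

lemma tendsto_trace_flow_div_trace_pow (hlam : (1 - lam) * (1 + e * d) = 1) (hr_gt : 1 < r ^ 2)
    (hr : r ^ 2 = (e + d) * r + 1) {E D C : Matrix (Fin 2) (Fin 2) ℝ}
    (hE : E = !![e, 1; 0, 0]) (hD : D = !![d, 0; 1, 0]) (hC : C = E + D) :
    Tendsto (fun L : ℕ => ((D * E * E * C ^ (L - 3)).trace + lam * (D * E * D * C ^ (L - 3)).trace)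
        / (C ^ L).trace)
      atTop (nhds (modelBDensity d r * (e / r))) := by
  have hr₀ : r ≠ 0 := ne_zero_of_sq_eq_mul_add_one hr
  have hEE : E * E = e • E := by
    ext i j; fin_cases i <;> fin_cases j <;> simp [hE]
  have hDD : D * D = d • D := by
    ext i j; fin_cases i <;> fin_cases j <;> simp [hD]
  have hDED : D * E * D = (1 + e * d) • D := by
    ext i j; fin_cases i <;> fin_cases j <;> simp [hE, hD] <;> ring
  have hflow : D * E * E + lam • (D * E * D) = e • (D * C) := by
    rw [hC, mul_mul_add_smul_mul_mul_eq_smul_mul_add hEE hDD hDED hlam]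
  have hlim := (tendsto_trace_particle_mul_pow_sub_div_trace_pow hr_gt hr hE hD hC 2).const_mul e
  have hval : e * (modelBDensity d r * r / r ^ 2) = modelBDensity d r * (e / r) := by
    field_simp
  rw [hval] at hlim
  refine hlim.congr' ?_
  filter_upwards [eventually_ge_atTop 3] with L hL
  have hpow : C ^ (L - 2) = C * C ^ (L - 3) := by
    rw [← pow_succ', show L - 3 + 1 = L - 2 by lia]
  rw [← smul_eq_mul lam, ← trace_smul, ← trace_add, ← smul_mul_assoc, ← add_mul, hflow,
    smul_mul_assoc, trace_smul, smul_eq_mul, mul_assoc, ← hpow, mul_div_assoc]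

end TraceRatios

theorem modelB_fundamental_diagram_general (lam e d : ℝ) (hlam : lam < 1) (hsum : e + d ≠ 0)
    (hed : e * d = lam / (1 - lam))
    (E D C : Matrix (Fin 2) (Fin 2) ℝ)
    (hE : E = !![e, 1; 0, 0]) (hD : D = !![d, 0; 1, 0]) (hC : C = E + D) :
    ∃ ρ J : ℝ,
      Tendsto (fun L : ℕ => (D * C ^ (L - 1)).trace / (C ^ L).trace)
        atTop (nhds ρ)
      ∧ Tendsto (fun L : ℕ =>
          ((D * E * E * C ^ (L - 3)).trace + lam * (D * E * D * C ^ (L - 3)).trace)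
            / (C ^ L).trace)
        atTop (nhds J)
      ∧ ρ ∈ Set.Ioo (0 : ℝ) 1
      ∧ J = ρ * (1 - (1 - Real.sqrt (1 - 4 * (1 - lam) * ρ * (1 - ρ)))
          / (2 * (1 - lam) * (1 - ρ))) := by
  obtain ⟨r, hr_gt, hr⟩ := exists_one_lt_sq_and_sq_eq_mul_add_one hsum
  have hr₀ : r ≠ 0 := ne_zero_of_sq_eq_mul_add_one hr
  have hlam_ed : (1 - lam) * (1 + e * d) = 1 := by
    rw [hed, mul_one_add, mul_div_cancel₀ _ (sub_pos.mpr hlam).ne', sub_add_cancel]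
  refine ⟨modelBDensity d r, modelBDensity d r * (e / r), ?_,
    tendsto_trace_flow_div_trace_pow hlam_ed hr_gt hr hE hD hC,
    modelBDensity_mem_Ioo hlam hlam_ed hr, ?_⟩
  · simpa only [pow_one, mul_div_cancel_right₀ _ hr₀] using
      tendsto_trace_particle_mul_pow_sub_div_trace_pow hr_gt hr hE hD hC 1
  · rw [one_sub_sqrt_div_modelBDensity hlam_ed hr_gt.le hr]

/-- **Fundamental diagram of model B**: with the two-dimensional matrix-product matrices
`E = [[e,1],[0,0]]`, `D = [[d,0],[1,0]]` (`e·d = λ/(1-λ)`) and `C = E + D`, the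
thermodynamic-limit density `ρ = lim Trace(D C^{L-1})/Trace(C^L)` and flow
`J = lim [Trace(D E E C^{L-3}) + λ Trace(D E D C^{L-3})]/Trace(C^L)` exist,
`ρ ∈ (0,1)`, and `J = ρ[1 - (1 - √(1 - 4(1-λ)ρ(1-ρ)))/(2(1-λ)(1-ρ))]`. -/
theorem modelB_fundamental_diagram (lam e d : ℝ) (hlam : lam ∈ Set.Ioo (0 : ℝ) 1)
    (he : 0 < e) (hd : 0 < d) (hed : e * d = lam / (1 - lam))
    (E D C : Matrix (Fin 2) (Fin 2) ℝ)
    (hE : E = !![e, 1; 0, 0]) (hD : D = !![d, 0; 1, 0]) (hC : C = E + D) :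
    ∃ ρ J : ℝ,
      Tendsto (fun L : ℕ => (D * C ^ (L - 1)).trace / (C ^ L).trace)
        atTop (nhds ρ)
      ∧ Tendsto (fun L : ℕ =>
          ((D * E * E * C ^ (L - 3)).trace + lam * (D * E * D * C ^ (L - 3)).trace)
            / (C ^ L).trace)
        atTop (nhds J)
      ∧ ρ ∈ Set.Ioo (0 : ℝ) 1
      ∧ J = ρ * (1 - (1 - Real.sqrt (1 - 4 * (1 - lam) * ρ * (1 - ρ)))
          / (2 * (1 - lam) * (1 - ρ))) :=
  modelB_fundamental_diagram_general lam e d hlam.2 (add_pos he hd).ne' hed E D C hE hD hC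
end
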